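/- arXiv:1108.3367 — 9 statements merged into one kernel-verified Lean document; each statement's English description precedes it below -/
import Mathlib

section
/- Let p, p₀, p₀', q₀, q₀' be complex numbers with p ≠ 0, q₀ ≠ 0, q₀' ≠ 0, and define the coefficient sequences a_{n+1} = p·n + p₀, a'_n = p·n + p₀', b_{n+1} = q₀, b'_n = q₀' (the class D⁼₁₀: degree-1 numerators with equal leading coefficients, constant denominators). Suppose X : ℕ → ℂ satisfies the tail recurrence (b'_n·b_{n+1} + a_{n+1})·X_n + b'_n·X_n·X_{n+1} − a'_n·X_{n+1} − a'_n·b_{n+1} = 0 for all n ≥ 1, and there exist complex numbers τ₋₂, τ₋₁, τ₀, τ₁ such that X_n = τ₋₂·n + τ₋₁·n^{1/2} + τ₀ + τ₁·n^{−1/2} + O(n^{−1}) as n → ∞. Then τ₋₂ = 0, q₀'·τ₋₁² = q₀·p (so in particular τ₋₁ ≠ 0), and τ₀ = (2p₀' − 2q₀'·q₀ + p − 2p₀)/(4q₀'). -/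
open Asymptotics Filter

/-- `n^s` as a complex number, for `n : ℕ` and a real exponent `s`. -/
noncomputable def rpowC (s : ℝ) (n : ℕ) : ℂ := (((n : ℝ) ^ s : ℝ) : ℂ)

/-!
Put `ΔXₙ = Xₙ₊₁ - Xₙ`. The recurrence reads
`(p n + p₀') (ΔXₙ + q₀) = q₀' Xₙ² + (q₀' ΔXₙ + q₀' q₀ + p₀ - p₀') Xₙ`.
If `Xₙ = τ₋₂ n + τ₋₁ √n + τ₀ + o(1)`, then `ΔXₙ → τ₋₂`; comparing the terms of order `n²` gives
`τ₋₂ = 0`, and then those of order `n` give `q₀' τ₋₁² = q₀ p`. The terms of order `√n` now show that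
`p √n ΔXₙ` tends to `(2 q₀' τ₀ + q₀' q₀ + p₀ - p₀') τ₋₁`. By the Stolz–Cesàro theorem the limit of
`√n ΔXₙ` is half that of `Xₙ / √n`, which is `τ₋₁`, and solving for `τ₀` finishes the proof.
-/

open Topology

/-- The **Stolz–Cesàro theorem**. -/
theorem tendsto_inv_smul_of_tendsto_inv_succ_sub_smul {E : Type*} [NormedAddCommGroup E]
    [NormedSpace ℝ E] {f : ℕ → E} {g : ℕ → ℝ} {l : E} (hg : StrictMono g)
    (hg_top : Tendsto g atTop atTop)
    (h : Tendsto (fun n => (g (n + 1) - g n)⁻¹ • (f (n + 1) - f n)) atTop (𝓝 l)) :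
    Tendsto (fun n => (g n)⁻¹ • f n) atTop (𝓝 l) := by
  have hpos (n : ℕ) : 0 < g (n + 1) - g n := sub_pos.2 (hg n.lt_succ_self)
  have hnorm : Tendsto (norm ∘ g) atTop atTop := tendsto_norm_atTop_atTop.comp hg_top
  have hconst : (fun _ => g 0) =o[atTop] g := isLittleO_const_left.2 (.inr hnorm)
  have hconst' : (fun _ => f 0 - g 0 • l) =o[atTop] g := isLittleO_const_left.2 (.inr hnorm)
  have hstep : (fun n => (f (n + 1) - g (n + 1) • l) - (f n - g n • l))
      =o[atTop] fun n => g (n + 1) - g n := by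
    have h0 := (isLittleO_one_iff ℝ).2 (tendsto_sub_nhds_zero_iff.2 h)
    refine ((isBigO_refl (fun n => g (n + 1) - g n) atTop).smul_isLittleO h0).congr
      (fun n => ?_) fun n => by rw [smul_eq_mul, mul_one]
    rw [smul_sub, smul_inv_smul₀ (hpos n).ne']
    module
  have hsum := hstep.sum_range (fun n => (hpos n).le) (by
    simpa only [Finset.sum_range_sub, sub_eq_add_neg (_ : ℝ) (g 0)] using
      tendsto_atTop_add_const_right _ (-g 0) hg_top)
  simp only [Finset.sum_range_sub, Finset.sum_range_sub (fun n => f n - g n • l)] at hsum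
  have hsub : (fun n => f n - g n • l) =o[atTop] g :=
    ((hsum.trans_isBigO ((isBigO_refl g atTop).sub hconst.isBigO)).add hconst').congr_left
      fun n => sub_add_cancel _ _
  refine tendsto_sub_nhds_zero_iff.1 (hsub.tendsto_inv_smul_nhds_zero.congr' ?_)
  filter_upwards [hg_top.eventually_gt_atTop 0] with n hn
  rw [smul_sub, inv_smul_smul₀ hn.ne']

theorem strictMono_sqrt_natCast : StrictMono fun n : ℕ => √(n : ℝ) := fun _ _ h =>
  Real.sqrt_lt_sqrt (Nat.cast_nonneg _) (Nat.cast_lt.2 h)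

theorem tendsto_sqrt_natCast_atTop : Tendsto (fun n : ℕ => √(n : ℝ)) atTop atTop :=
  Real.tendsto_sqrt_atTop.comp tendsto_natCast_atTop_atTop

theorem tendsto_sqrt_mul_sqrt_succ_sub_sqrt :
    Tendsto (fun n : ℕ => √(n : ℝ) * (√((n + 1 : ℕ) : ℝ) - √(n : ℝ))) atTop (𝓝 (1 / 2)) := by
  have hratio : Tendsto (fun n : ℕ => √((n : ℝ) / (n + 1))) atTop (𝓝 1) := by
    simpa using (tendsto_natCast_div_add_atTop (1 : ℝ)).sqrt
  have hlim := hratio.div (hratio.const_add 1) (by norm_num)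
  rw [one_add_one_eq_two] at hlim
  refine hlim.congr fun n => ?_
  have hsq : √((n : ℝ) + 1) ^ 2 = √(n : ℝ) ^ 2 + 1 := by
    rw [Real.sq_sqrt (by positivity), Real.sq_sqrt (by positivity)]
  rw [Pi.div_apply, Real.sqrt_div n.cast_nonneg, Nat.cast_succ]
  field_simp
  linear_combination -√(n : ℝ) * hsq

theorem tendsto_sqrt_succ_sub_sqrt :
    Tendsto (fun n : ℕ => √((n + 1 : ℕ) : ℝ) - √(n : ℝ)) atTop (𝓝 0) := by
  have hlim := tendsto_sqrt_natCast_atTop.inv_tendsto_atTop.mul tendsto_sqrt_mul_sqrt_succ_sub_sqrt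
  rw [zero_mul] at hlim
  refine hlim.congr' ?_
  filter_upwards [tendsto_sqrt_natCast_atTop.eventually_ne_atTop 0] with n hn
  exact inv_mul_cancel_left₀ hn _

section SqrtExpansion

variable {𝕜 : Type*} [RCLike 𝕜] {X : ℕ → 𝕜} {A B C : 𝕜}

theorem ofReal_sqrt_natCast_sq (n : ℕ) : (√(n : ℝ) : 𝕜) ^ 2 = n := by
  rw [← RCLike.ofReal_pow, Real.sq_sqrt n.cast_nonneg, RCLike.ofReal_natCast]

theorem eventually_ofReal_sqrt_natCast_ne_zero :
    ∀ᶠ n : ℕ in atTop, (√(n : ℝ) : 𝕜) ≠ 0 :=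
  (tendsto_sqrt_natCast_atTop.eventually_ne_atTop 0).mono fun _ => RCLike.ofReal_ne_zero.2

theorem tendsto_inv_ofReal_sqrt_natCast :
    Tendsto (fun n : ℕ => (√(n : ℝ) : 𝕜)⁻¹) atTop (𝓝 0) := by
  simpa [Function.comp_def] using
    ((RCLike.continuous_ofReal (K := 𝕜)).tendsto 0).comp
      tendsto_sqrt_natCast_atTop.inv_tendsto_atTop

theorem tendsto_div_sqrt_of_tendsto_sqrt_mul_succ_sub {c : 𝕜}
    (h : Tendsto (fun n : ℕ => (√(n : ℝ) : 𝕜) * (X (n + 1) - X n)) atTop (𝓝 c)) :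
    Tendsto (fun n : ℕ => X n / (√(n : ℝ) : 𝕜)) atTop (𝓝 (2 * c)) := by
  have hquot : Tendsto (fun n : ℕ => (√((n + 1 : ℕ) : ℝ) - √(n : ℝ))⁻¹ • (X (n + 1) - X n))
      atTop (𝓝 ((1 / 2 : ℝ)⁻¹ • c)) := by
    refine ((tendsto_sqrt_mul_sqrt_succ_sub_sqrt.inv₀ (by norm_num)).smul h).congr' ?_
    filter_upwards [tendsto_sqrt_natCast_atTop.eventually_ne_atTop 0] with n hn
    rw [← RCLike.real_smul_eq_coe_mul, smul_smul, mul_inv_rev, inv_mul_cancel_right₀ hn]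
  convert tendsto_inv_smul_of_tendsto_inv_succ_sub_smul strictMono_sqrt_natCast
    tendsto_sqrt_natCast_atTop hquot using 2 with n
  · rw [RCLike.real_smul_eq_coe_mul, RCLike.ofReal_inv, div_eq_inv_mul]
  · rw [one_div, inv_inv, ofNat_smul_eq_nsmul, nsmul_eq_mul, Nat.cast_ofNat]

theorem tendsto_succ_sub_of_tendsto_sub_sqrt_expansion
    (hX : Tendsto (fun n : ℕ => X n - (A * n + B * (√(n : ℝ) : 𝕜) + C)) atTop (𝓝 0)) :
    Tendsto (fun n => X (n + 1) - X n) atTop (𝓝 A) := by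
  have hsqrt : Tendsto (fun n : ℕ => (√((n + 1 : ℕ) : ℝ) - √(n : ℝ) : 𝕜)) atTop (𝓝 0) := by
    simpa [Function.comp_def] using
      ((RCLike.continuous_ofReal (K := 𝕜)).tendsto 0).comp tendsto_sqrt_succ_sub_sqrt
  have hlim := ((hX.comp (tendsto_add_atTop_nat 1)).sub hX).add ((hsqrt.const_mul B).const_add A)
  simp only [mul_zero, add_zero, sub_zero, zero_add] at hlim
  refine hlim.congr fun n => ?_
  simp only [Function.comp_apply]
  push_cast
  ring

theorem tendsto_div_sqrt_of_tendsto_sub_sqrt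
    (hX : Tendsto (fun n : ℕ => X n - B * (√(n : ℝ) : 𝕜)) atTop (𝓝 C)) :
    Tendsto (fun n : ℕ => X n / (√(n : ℝ) : 𝕜)) atTop (𝓝 B) := by
  have hlim := (hX.mul tendsto_inv_ofReal_sqrt_natCast).const_add B
  rw [mul_zero, add_zero] at hlim
  refine hlim.congr' ?_
  filter_upwards [eventually_ofReal_sqrt_natCast_ne_zero (𝕜 := 𝕜)] with n hn
  field_simp
  ring

theorem tendsto_div_natCast_of_tendsto_sub_sqrt_expansion
    (hX : Tendsto (fun n : ℕ => X n - (A * n + B * (√(n : ℝ) : 𝕜) + C)) atTop (𝓝 0)) :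
    Tendsto (fun n : ℕ => X n / n) atTop (𝓝 A) := by
  have hinv := tendsto_inv_ofReal_sqrt_natCast (𝕜 := 𝕜)
  have hlim := ((hX.add_const C).mul (hinv.pow 2)).add ((hinv.const_mul B).const_add A)
  simp only [zero_add, mul_zero, add_zero, ne_eq, OfNat.ofNat_ne_zero, not_false_eq_true,
    zero_pow] at hlim
  refine hlim.congr' ?_
  filter_upwards [eventually_ofReal_sqrt_natCast_ne_zero (𝕜 := 𝕜)] with n hn
  rw [← ofReal_sqrt_natCast_sq (𝕜 := 𝕜) n]
  field_simp
  ring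

end SqrtExpansion

/-- `X` satisfies, from some index on, the tail recurrence of the class D⁼₁₀, that is, of the
two-variant continued fraction with `a_{n+1} = p n + p₀`, `a'_n = p n + p₀'`, `b_{n+1} = q₀` and
`b'_n = q₀'`; these values are substituted in the relation. -/
def IsEventualTail {R : Type*} [CommRing R] (p p₀ p₀' q₀ q₀' : R) (X : ℕ → R) : Prop :=
  ∀ᶠ n : ℕ in atTop, (q₀' * q₀ + (p * n + p₀)) * X n + q₀' * X n * X (n + 1)
    - (p * n + p₀') * X (n + 1) - (p * n + p₀') * q₀ = 0

namespace IsEventualTail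

theorem eventually_difference_eq {R : Type*} [CommRing R] {p p₀ p₀' q₀ q₀' : R} {X : ℕ → R}
    (h : IsEventualTail p p₀ p₀' q₀ q₀' X) :
    ∀ᶠ n : ℕ in atTop, (p * n + p₀') * (X (n + 1) - X n + q₀) =
      q₀' * X n ^ 2 + (q₀' * (X (n + 1) - X n) + (q₀' * q₀ + p₀ - p₀')) * X n :=
  h.mono fun n hn => by linear_combination -hn

variable {𝕜 : Type*} [RCLike 𝕜] {p p₀ p₀' q₀ q₀' : 𝕜} {X : ℕ → 𝕜} {A B C δ : 𝕜}

theorem eq_zero_of_tendsto_div_natCast (h : IsEventualTail p p₀ p₀' q₀ q₀' X) (hq₀' : q₀' ≠ 0)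
    (hΔ : Tendsto (fun n => X (n + 1) - X n) atTop (𝓝 δ))
    (hX : Tendsto (fun n : ℕ => X n / n) atTop (𝓝 A)) : A = 0 := by
  have hinv := tendsto_inv_atTop_nhds_zero_nat (𝕜 := 𝕜)
  have hleft : Tendsto (fun n : ℕ => (p + p₀' * (n : 𝕜)⁻¹) * ((X (n + 1) - X n + q₀) * (n : 𝕜)⁻¹))
      atTop (𝓝 0) := by
    simpa using ((hinv.const_mul p₀').const_add p).mul ((hΔ.add_const q₀).mul hinv)
  have hright : Tendsto (fun n : ℕ => q₀' * (X n / n) ^ 2 +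
      (q₀' * (X (n + 1) - X n) + (q₀' * q₀ + p₀ - p₀')) * (X n / n) * (n : 𝕜)⁻¹)
      atTop (𝓝 (q₀' * A ^ 2)) := by
    simpa using ((hX.pow 2).const_mul q₀').add
      ((((hΔ.const_mul q₀').add_const (q₀' * q₀ + p₀ - p₀')).mul hX).mul hinv)
  have heq : 0 = q₀' * A ^ 2 := by
    refine tendsto_nhds_unique_of_eventuallyEq hleft hright ?_
    filter_upwards [h.eventually_difference_eq, eventually_ne_atTop 0] with n hn hn0
    have : (n : 𝕜) ≠ 0 := Nat.cast_ne_zero.2 hn0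
    field_simp
    linear_combination hn
  simpa [hq₀'] using heq.symm

theorem mul_sq_eq_of_tendsto_div_sqrt (h : IsEventualTail p p₀ p₀' q₀ q₀' X)
    (hΔ : Tendsto (fun n => X (n + 1) - X n) atTop (𝓝 0))
    (hX : Tendsto (fun n : ℕ => X n / (√(n : ℝ) : 𝕜)) atTop (𝓝 B)) : q₀' * B ^ 2 = q₀ * p := by
  have hinv := tendsto_inv_ofReal_sqrt_natCast (𝕜 := 𝕜)
  have hleft : Tendsto (fun n : ℕ => (p + p₀' * (√(n : ℝ) : 𝕜)⁻¹ ^ 2) * (X (n + 1) - X n + q₀))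
      atTop (𝓝 (p * q₀)) := by
    simpa using (((hinv.pow 2).const_mul p₀').const_add p).mul (hΔ.add_const q₀)
  have hright : Tendsto (fun n : ℕ => q₀' * (X n / (√(n : ℝ) : 𝕜)) ^ 2 +
      (q₀' * (X (n + 1) - X n) + (q₀' * q₀ + p₀ - p₀')) * (X n / (√(n : ℝ) : 𝕜)) *
        (√(n : ℝ) : 𝕜)⁻¹) atTop (𝓝 (q₀' * B ^ 2)) := by
    simpa using ((hX.pow 2).const_mul q₀').add
      ((((hΔ.const_mul q₀').add_const (q₀' * q₀ + p₀ - p₀')).mul hX).mul hinv)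
  have heq : p * q₀ = q₀' * B ^ 2 := by
    refine tendsto_nhds_unique_of_eventuallyEq hleft hright ?_
    filter_upwards [h.eventually_difference_eq,
      eventually_ofReal_sqrt_natCast_ne_zero (𝕜 := 𝕜)] with n hn hn0
    rw [← ofReal_sqrt_natCast_sq (𝕜 := 𝕜) n] at hn
    field_simp
    linear_combination hn
  rw [← heq, mul_comm]

theorem tendsto_mul_sqrt_mul_succ_sub (h : IsEventualTail p p₀ p₀' q₀ q₀' X)
    (hB : q₀' * B ^ 2 = q₀ * p) (hΔ : Tendsto (fun n => X (n + 1) - X n) atTop (𝓝 0))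
    (hX : Tendsto (fun n : ℕ => X n - B * (√(n : ℝ) : 𝕜)) atTop (𝓝 C)) :
    Tendsto (fun n : ℕ => p * ((√(n : ℝ) : 𝕜) * (X (n + 1) - X n))) atTop
      (𝓝 ((2 * q₀' * C + (q₀' * q₀ + p₀ - p₀')) * B)) := by
  have hinv := tendsto_inv_ofReal_sqrt_natCast (𝕜 := 𝕜)
  have hdiv := tendsto_div_sqrt_of_tendsto_sub_sqrt hX
  have hlim : Tendsto (fun n : ℕ =>
      q₀' * ((X n - B * (√(n : ℝ) : 𝕜)) * (X n / (√(n : ℝ) : 𝕜) + B)) +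
        (q₀' * (X (n + 1) - X n) + (q₀' * q₀ + p₀ - p₀')) * (X n / (√(n : ℝ) : 𝕜)) -
        p₀' * (X (n + 1) - X n + q₀) * (√(n : ℝ) : 𝕜)⁻¹) atTop
      (𝓝 (q₀' * (C * (B + B)) + (q₀' * 0 + (q₀' * q₀ + p₀ - p₀')) * B - p₀' * (0 + q₀) * 0)) :=
    (((hX.mul (hdiv.add_const B)).const_mul q₀').add
      (((hΔ.const_mul q₀').add_const _).mul hdiv)).sub
        (((hΔ.add_const q₀).const_mul p₀').mul hinv)
  convert hlim.congr' ?_ using 2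
  · ring
  filter_upwards [h.eventually_difference_eq,
    eventually_ofReal_sqrt_natCast_ne_zero (𝕜 := 𝕜)] with n hn hn0
  rw [← ofReal_sqrt_natCast_sq (𝕜 := 𝕜) n] at hn
  field_simp
  linear_combination -hn - (√(n : ℝ) : 𝕜) ^ 2 * hB

theorem eq_div_of_tendsto_sub_sqrt (h : IsEventualTail p p₀ p₀' q₀ q₀' X) (hp : p ≠ 0)
    (hq₀' : q₀' ≠ 0) (hB0 : B ≠ 0) (hB : q₀' * B ^ 2 = q₀ * p)
    (hΔ : Tendsto (fun n => X (n + 1) - X n) atTop (𝓝 0))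
    (hX : Tendsto (fun n : ℕ => X n - B * (√(n : ℝ) : 𝕜)) atTop (𝓝 C)) :
    C = (2 * p₀' - 2 * q₀' * q₀ + p - 2 * p₀) / (4 * q₀') := by
  have hlim : Tendsto (fun n : ℕ => (√(n : ℝ) : 𝕜) * (X (n + 1) - X n)) atTop
      (𝓝 (p⁻¹ * ((2 * q₀' * C + (q₀' * q₀ + p₀ - p₀')) * B))) :=
    ((h.tendsto_mul_sqrt_mul_succ_sub hB hΔ hX).const_mul p⁻¹).congr
      fun n => inv_mul_cancel_left₀ hp _
  have heq : 2 * (p⁻¹ * ((2 * q₀' * C + (q₀' * q₀ + p₀ - p₀')) * B)) = B :=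
    tendsto_nhds_unique (tendsto_div_sqrt_of_tendsto_sqrt_mul_succ_sub hlim)
      (tendsto_div_sqrt_of_tendsto_sub_sqrt hX)
  field_simp at heq ⊢
  linear_combination heq

end IsEventualTail

theorem stmt0_general {𝕜 : Type*} [RCLike 𝕜] {p p₀ p₀' q₀ q₀' : 𝕜} (hp : p ≠ 0) (hq₀ : q₀ ≠ 0)
    (hq₀' : q₀' ≠ 0) {X : ℕ → 𝕜} (h : IsEventualTail p p₀ p₀' q₀ q₀' X) {τm2 τm1 τ0 : 𝕜}
    (hX : Tendsto (fun n : ℕ => X n - (τm2 * n + τm1 * (√(n : ℝ) : 𝕜) + τ0)) atTop (𝓝 0)) :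
    τm2 = 0 ∧ q₀' * τm1 ^ 2 = q₀ * p ∧ τm1 ≠ 0 ∧
      τ0 = (2 * p₀' - 2 * q₀' * q₀ + p - 2 * p₀) / (4 * q₀') := by
  have hΔ := tendsto_succ_sub_of_tendsto_sub_sqrt_expansion hX
  obtain rfl : τm2 = 0 := h.eq_zero_of_tendsto_div_natCast hq₀' hΔ
    (tendsto_div_natCast_of_tendsto_sub_sqrt_expansion hX)
  have hX' : Tendsto (fun n : ℕ => X n - τm1 * (√(n : ℝ) : 𝕜)) atTop (𝓝 τ0) :=
    tendsto_sub_nhds_zero_iff.1 (hX.congr fun n => by ring)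
  have hsq : q₀' * τm1 ^ 2 = q₀ * p :=
    h.mul_sq_eq_of_tendsto_div_sqrt hΔ (tendsto_div_sqrt_of_tendsto_sub_sqrt hX')
  have hne : τm1 ≠ 0 := by
    rintro rfl
    simp [hp, hq₀] at hsq
  exact ⟨rfl, hsq, hne, h.eq_div_of_tendsto_sub_sqrt hp hq₀' hne hsq hΔ hX'⟩

theorem tendsto_natCast_rpow_of_neg {s : ℝ} (hs : s < 0) :
    Tendsto (fun n : ℕ => (n : ℝ) ^ s) atTop (𝓝 0) := by
  simpa only [neg_neg, Function.comp_def] using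
    (tendsto_rpow_neg_atTop (neg_pos.2 hs)).comp tendsto_natCast_atTop_atTop

theorem tendsto_rpowC_of_neg {s : ℝ} (hs : s < 0) : Tendsto (rpowC s) atTop (𝓝 0) :=
  Complex.ofReal_zero ▸ (tendsto_natCast_rpow_of_neg hs).ofReal

theorem tendsto_sub_sqrt_expansion_of_isBigO {X : ℕ → ℂ} {A B C D : ℂ} {s t : ℝ}
    (hs : s < 0) (ht : t < 0)
    (hX : (fun n : ℕ => X n - (A * n + B * rpowC (1 / 2) n + C + D * rpowC s n))
      =O[atTop] fun n : ℕ => (n : ℝ) ^ t) :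
    Tendsto (fun n : ℕ => X n - (A * n + B * (√(n : ℝ) : ℂ) + C)) atTop (𝓝 0) := by
  have hlim := (hX.trans_tendsto (tendsto_natCast_rpow_of_neg ht)).add
    ((tendsto_rpowC_of_neg hs).const_mul D)
  rw [mul_zero, add_zero] at hlim
  refine hlim.congr fun n => ?_
  rw [rpowC, ← Real.sqrt_eq_rpow]
  ring

/-- Class D⁼₁₀: the tail expansion of a two-variant continued fraction with
`a_{n+1} = p n + p₀`, `a'_n = p n + p₀'`, `b_{n+1} = q₀`, `b'_n = q₀'` has
`τ₋₂ = 0`, `q₀' τ₋₁² = q₀ p` (so `τ₋₁ ≠ 0`) and the stated value of `τ₀`. -/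
theorem stmt0 (p p₀ p₀' q₀ q₀' : ℂ) (hp : p ≠ 0) (hq₀ : q₀ ≠ 0) (hq₀' : q₀' ≠ 0)
    (a a' b b' : ℕ → ℂ)
    (ha : ∀ n : ℕ, a (n + 1) = p * n + p₀)
    (ha' : ∀ n : ℕ, a' n = p * n + p₀')
    (hb : ∀ n : ℕ, b (n + 1) = q₀)
    (hb' : ∀ n : ℕ, b' n = q₀')
    (X : ℕ → ℂ)
    (hrec : ∀ n : ℕ, 1 ≤ n →
      (b' n * b (n + 1) + a (n + 1)) * X n + b' n * X n * X (n + 1)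
        - a' n * X (n + 1) - a' n * b (n + 1) = 0)
    (τm2 τm1 τ0 τ1 : ℂ)
    (hX : (fun n : ℕ => X n
        - (τm2 * n + τm1 * rpowC (1 / 2) n + τ0 + τ1 * rpowC (-(1 / 2)) n))
      =O[atTop] fun n : ℕ => (n : ℝ) ^ (-(1 : ℝ))) :
    τm2 = 0 ∧ q₀' * τm1 ^ 2 = q₀ * p ∧ τm1 ≠ 0 ∧
      τ0 = (2 * p₀' - 2 * q₀' * q₀ + p - 2 * p₀) / (4 * q₀') :=
  stmt0_general hp hq₀ hq₀'
    ((eventually_ge_atTop 1).mono fun n hn => by simpa only [ha, ha', hb, hb'] using hrec n hn)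
    (tendsto_sub_sqrt_expansion_of_isBigO (by norm_num) (by norm_num) hX)
end

section
/- Let p₋₁, p₋₁', p₀, p₀', q₋₁, q₋₁', q₀, q₀' be complex numbers with p₋₁ ≠ 0, p₋₁' ≠ 0, q₋₁ ≠ 0, q₋₁' ≠ 0 (the class D₁₁: degree-1 numerators and degree-1 denominators). Let a, a', b, b' : ℕ → ℂ satisfy a_{n+1} = p₋₁·n + p₀ + O(n^{−1}), a'_n = p₋₁'·n + p₀' + O(n^{−1}), b_{n+1} = q₋₁·n + q₀ + O(n^{−1}), b'_n = q₋₁'·n + q₀' + O(n^{−1}). Suppose X : ℕ → ℂ satisfies the tail recurrence (b'_n·b_{n+1} + a_{n+1})·X_n + b'_n·X_n·X_{n+1} − a'_n·X_{n+1} − a'_n·b_{n+1} = 0 for all n ≥ 1, and X_n = τ₋₂·n + τ₋₁·n^{1/2} + τ₀ + τ₁·n^{−1/2} + O(n^{−1}) for some complex τ₋₂, τ₋₁, τ₀, τ₁. Then τ₋₁ = 0, τ₋₂ = 0 or τ₋₂ = −q₋₁, and moreover: if τ₋₂ = 0 then τ₀ = p₋₁'/q₋₁', while if τ₋₂ = −q₋₁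 then τ₀ = q₋₁ − q₀ − p₋₁/q₋₁'. -/
open Asymptotics Filter

/-!
With `Y n = X (n + 1) + b (n + 1)` the recurrence becomes the symmetric bilinear relation
`b' n * X n * Y n + a (n + 1) * X n - a' n * Y n = 0`. Dividing by `n ^ 3` shows that one of `X n`,
`Y n` is `o(n)`; the other then grows linearly, because `b (n + 1)` does. Dividing the relation by
`n` times the growing factor gives the limit of the small one. Thus `X n` or `X n + q n` converges,
where `q` is the slope of `b (n + 1)`, and this leaves no room for a `√n` term.
-/

open Bornology Topology

section Bilinear

variable {ι 𝕜 : Type*} [Field 𝕜] [TopologicalSpace 𝕜] [IsTopologicalDivisionRing 𝕜] [T2Space 𝕜]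
  {l : Filter ι} {A A' B r x y : ι → 𝕜} {α α' β ξ η : 𝕜}

theorem mul_eq_zero_of_bilinear [l.NeBot]
    (hrel : ∀ᶠ i in l, B i * x i * y i + A i * x i - A' i * y i = 0)
    (hr : Tendsto (fun i => (r i)⁻¹) l (𝓝 0))
    (hA : Tendsto (fun i => A i / r i) l (𝓝 α)) (hA' : Tendsto (fun i => A' i / r i) l (𝓝 α'))
    (hB : Tendsto (fun i => B i / r i) l (𝓝 β)) (hβ : β ≠ 0)
    (hx : Tendsto (fun i => x i / r i) l (𝓝 ξ)) (hy : Tendsto (fun i => y i / r i) l (𝓝 η)) :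
    ξ * η = 0 := by
  have hscaled := ((hB.mul hx).mul hy).add (((hA.mul hx).sub (hA'.mul hy)).mul hr)
  rw [mul_zero, add_zero] at hscaled
  have hzero : β * ξ * η = 0 := tendsto_nhds_unique_of_eventuallyEq hscaled tendsto_const_nhds <| by
    filter_upwards [hrel] with i hi
    linear_combination (r i)⁻¹ ^ 3 * hi
  exact (mul_eq_zero.1 (mul_assoc β ξ η ▸ hzero)).resolve_left hβ

theorem tendsto_div_of_bilinear
    (hrel : ∀ᶠ i in l, B i * x i * y i + A i * x i - A' i * y i = 0)
    (hA : Tendsto (fun i => A i / r i) l (𝓝 α)) (hA' : Tendsto (fun i => A' i / r i) l (𝓝 α'))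
    (hB : Tendsto (fun i => B i / r i) l (𝓝 β)) (hβ : β ≠ 0)
    (hx : Tendsto (fun i => x i / r i) l (𝓝 0)) (hy : Tendsto (fun i => y i / r i) l (𝓝 η))
    (hη : η ≠ 0) :
    Tendsto x l (𝓝 (α' / β)) := by
  have hlim := (hA'.sub (hA.mul (hx.div hy hη))).div hB hβ
  rw [zero_div, mul_zero, sub_zero] at hlim
  refine hlim.congr' ?_
  filter_upwards [hrel, hB.eventually_ne hβ, hy.eventually_ne hη] with i hi hBi hyi
  obtain ⟨hB0, hr0⟩ := div_ne_zero_iff.1 hBi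
  have hy0 := (div_ne_zero_iff.1 hyi).1
  simp only [Pi.div_apply]
  field_simp
  linear_combination -hi

end Bilinear

section CoboundedScale

variable {ι 𝕜 : Type*} [NormedField 𝕜] {l : Filter ι} {f g : ι → 𝕜} {c d ℓ : 𝕜}

theorem tendsto_div_of_tendsto_sub_mul (hg : Tendsto g l (cobounded 𝕜))
    (h : Tendsto (fun i => f i - c * g i) l (𝓝 d)) : Tendsto (fun i => f i / g i) l (𝓝 c) := by
  have hlim := (h.mul (tendsto_inv₀_cobounded.comp hg)).add_const c
  rw [mul_zero, zero_add] at hlim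
  refine hlim.congr' ?_
  filter_upwards [hg.eventually_ne_cobounded 0] with i hi
  simp only [Function.comp_apply]
  field_simp
  ring

theorem eq_zero_and_eq_of_tendsto_sub_mul [l.NeBot] (hg : Tendsto g l (cobounded 𝕜))
    (hf : Tendsto f l (𝓝 ℓ)) (h : Tendsto (fun i => f i - c * g i) l (𝓝 d)) :
    c = 0 ∧ d = ℓ := by
  have hf0 : Tendsto (fun i => f i / g i) l (𝓝 0) := by
    simpa [div_eq_mul_inv] using hf.mul (tendsto_inv₀_cobounded.comp hg)
  obtain rfl : c = 0 := tendsto_nhds_unique (tendsto_div_of_tendsto_sub_mul hg h) hf0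
  simp only [zero_mul, sub_zero] at h
  exact ⟨rfl, tendsto_nhds_unique h hf⟩

end CoboundedScale

section Tail

variable {𝕜 : Type*} [RCLike 𝕜] {a a' b b' g X f : ℕ → 𝕜} {c p p' q q₀ q' τm2 τm1 τ0 : 𝕜}

theorem tendsto_succ_div_natCast (h : Tendsto (fun n : ℕ => f n / n) atTop (𝓝 c)) :
    Tendsto (fun n : ℕ => f (n + 1) / n) atTop (𝓝 c) := by
  have hlim := ((tendsto_add_atTop_iff_nat 1).2 h).div
    (tendsto_natCast_div_add_atTop (1 : 𝕜)) one_ne_zero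
  rw [div_one] at hlim
  refine hlim.congr fun n => ?_
  simp only [Pi.div_apply, Nat.cast_add_one]
  exact div_div_div_cancel_right₀ (Nat.cast_add_one_ne_zero n) _ _

theorem tendsto_or_tendsto_add_of_tail_recurrence (hq : q ≠ 0) (hq' : q' ≠ 0)
    (ha : Tendsto (fun n : ℕ => a (n + 1) / n) atTop (𝓝 p))
    (ha' : Tendsto (fun n : ℕ => a' n / n) atTop (𝓝 p'))
    (hb : Tendsto (fun n : ℕ => b (n + 1) / n) atTop (𝓝 q))
    (hb' : Tendsto (fun n : ℕ => b' n / n) atTop (𝓝 q'))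
    (hrec : ∀ᶠ n in atTop, (b' n * b (n + 1) + a (n + 1)) * X n + b' n * X n * X (n + 1)
      - a' n * X (n + 1) - a' n * b (n + 1) = 0)
    (hX : Tendsto (fun n : ℕ => X n / n) atTop (𝓝 c)) :
    (c = 0 ∧ Tendsto X atTop (𝓝 (p' / q'))) ∨
      (c = -q ∧ Tendsto (fun n => X (n + 1) + b (n + 1)) atTop (𝓝 (-p / q'))) := by
  have hY : Tendsto (fun n : ℕ => (X (n + 1) + b (n + 1)) / n) atTop (𝓝 (c + q)) :=
    ((tendsto_succ_div_natCast hX).add hb).congr fun n => (add_div _ _ _).symm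
  have hrel : ∀ᶠ n in atTop, b' n * X n * (X (n + 1) + b (n + 1)) + a (n + 1) * X n
      - a' n * (X (n + 1) + b (n + 1)) = 0 :=
    hrec.mono fun n hn => by linear_combination hn
  have hr : Tendsto (fun n : ℕ => (n : 𝕜)⁻¹) atTop (𝓝 0) := tendsto_inv_atTop_nhds_zero_nat
  rcases mul_eq_zero.1 (mul_eq_zero_of_bilinear hrel hr ha ha' hb' hq' hX hY) with rfl | hc
  · rw [zero_add] at hY
    exact .inl ⟨rfl, tendsto_div_of_bilinear hrel ha ha' hb' hq' hX hY hq⟩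
  · obtain rfl := eq_neg_of_add_eq_zero_left hc
    rw [neg_add_cancel] at hY
    -- The relation keeps its shape under `X n ↔ Y n`, `a (n + 1) ↔ -a' n`.
    have hswap : ∀ᶠ n in atTop, b' n * (X (n + 1) + b (n + 1)) * X n
        + -a' n * (X (n + 1) + b (n + 1)) - -a (n + 1) * X n = 0 :=
      hrel.mono fun n hn => by linear_combination hn
    exact .inr ⟨rfl, tendsto_div_of_bilinear hswap (ha'.neg.congr fun n => (neg_div _ _).symm)
      (ha.neg.congr fun n => (neg_div _ _).symm) hb' hq' hY hX (neg_ne_zero.2 hq)⟩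

theorem stmt2_general (hq : q ≠ 0) (hq' : q' ≠ 0)
    (ha : Tendsto (fun n : ℕ => a (n + 1) / n) atTop (𝓝 p))
    (ha' : Tendsto (fun n : ℕ => a' n / n) atTop (𝓝 p'))
    (hb : Tendsto (fun n : ℕ => b (n + 1) - q * n) atTop (𝓝 q₀))
    (hb' : Tendsto (fun n : ℕ => b' n / n) atTop (𝓝 q'))
    (hrec : ∀ᶠ n in atTop, (b' n * b (n + 1) + a (n + 1)) * X n + b' n * X n * X (n + 1)
      - a' n * X (n + 1) - a' n * b (n + 1) = 0)
    (hg : Tendsto g atTop (cobounded 𝕜)) (hgn : Tendsto (fun n : ℕ => g n / n) atTop (𝓝 0))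
    (hX : Tendsto (fun n : ℕ => X n - (τm2 * n + τm1 * g n)) atTop (𝓝 τ0)) :
    τm1 = 0 ∧ (τm2 = 0 ∨ τm2 = -q) ∧
      (τm2 = 0 → τ0 = p' / q') ∧
      (τm2 = -q → τ0 = q - q₀ - p / q') := by
  have hcast : Tendsto (fun n : ℕ => (n : 𝕜)) atTop (cobounded 𝕜) :=
    tendsto_natCast_atTop_cobounded
  have hXn : Tendsto (fun n : ℕ => X n / n) atTop (𝓝 τm2) := by
    have hsub : Tendsto (fun n : ℕ => (X n - τm1 * g n) / n) atTop (𝓝 τm2) :=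
      tendsto_div_of_tendsto_sub_mul hcast (hX.congr fun n => by ring)
    have hlim := hsub.add (hgn.const_mul τm1)
    rw [mul_zero, add_zero] at hlim
    exact hlim.congr fun n => by ring
  rcases tendsto_or_tendsto_add_of_tail_recurrence hq hq' ha ha'
    (tendsto_div_of_tendsto_sub_mul hcast hb) hb' hrec hXn with ⟨rfl, hlim⟩ | ⟨rfl, hlim⟩
  · obtain ⟨hτm1, hτ0⟩ := eq_zero_and_eq_of_tendsto_sub_mul hg hlim (hX.congr fun n => by ring)
    exact ⟨hτm1, .inl rfl, fun _ => hτ0, fun h => absurd (neg_eq_zero.1 h.symm) hq⟩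
  · have hlim' : Tendsto (fun n : ℕ => X n + q * n) atTop (𝓝 (q - q₀ - p / q')) := by
      rw [← tendsto_add_atTop_iff_nat 1]
      convert! (hlim.sub hb).add_const q using 2
      · push_cast
        ring
      · ring
    obtain ⟨hτm1, hτ0⟩ :=
      eq_zero_and_eq_of_tendsto_sub_mul (c := τm1) hg hlim' (hX.congr fun n => by ring)
    exact ⟨hτm1, .inr rfl, fun h => absurd (neg_eq_zero.1 h) hq, fun _ => hτ0⟩

end Tail

section PowerScale

variable {s : ℝ} {f : ℕ → ℂ} {c d : ℂ}

theorem norm_rpowC (s : ℝ) (n : ℕ) : ‖rpowC s n‖ = (n : ℝ) ^ s := by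
  rw [rpowC, Complex.norm_real, Real.norm_of_nonneg (by positivity)]

theorem tendsto_natCast_rpow_neg_atTop (hs : 0 < s) :
    Tendsto (fun n : ℕ => (n : ℝ) ^ (-s)) atTop (𝓝 0) :=
  (tendsto_rpow_neg_atTop hs).comp tendsto_natCast_atTop_atTop

theorem tendsto_rpowC_neg (hs : 0 < s) : Tendsto (rpowC (-s)) atTop (𝓝 0) :=
  tendsto_zero_iff_norm_tendsto_zero.2 <| by
    simpa only [norm_rpowC] using tendsto_natCast_rpow_neg_atTop hs

theorem tendsto_rpowC_cobounded (hs : 0 < s) : Tendsto (rpowC s) atTop (cobounded ℂ) :=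
  tendsto_norm_atTop_iff_cobounded.1 <| by
    simpa only [norm_rpowC, Function.comp_def] using
      (tendsto_rpow_atTop hs).comp tendsto_natCast_atTop_atTop

theorem tendsto_rpowC_div_natCast (hs : s < 1) :
    Tendsto (fun n : ℕ => rpowC s n / n) atTop (𝓝 0) := by
  refine (tendsto_rpowC_neg (sub_pos.2 hs)).congr' ?_
  filter_upwards [eventually_ne_atTop 0] with n hn
  rw [rpowC, rpowC, neg_sub, Real.rpow_sub_one (Nat.cast_ne_zero.2 hn), Complex.ofReal_div,
    Complex.ofReal_natCast]

theorem tendsto_sub_mul_natCast_of_isBigO (hs : 0 < s)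
    (h : (fun n : ℕ => f n - (c * n + d)) =O[atTop] fun n : ℕ => (n : ℝ) ^ (-s)) :
    Tendsto (fun n : ℕ => f n - c * n) atTop (𝓝 d) := by
  have hlim := (h.trans_tendsto (tendsto_natCast_rpow_neg_atTop hs)).add_const d
  rw [zero_add] at hlim
  exact hlim.congr fun n => by ring

theorem tendsto_div_natCast_of_isBigO (hs : 0 < s)
    (h : (fun n : ℕ => f n - (c * n + d)) =O[atTop] fun n : ℕ => (n : ℝ) ^ (-s)) :
    Tendsto (fun n : ℕ => f n / n) atTop (𝓝 c) :=
  tendsto_div_of_tendsto_sub_mul tendsto_natCast_atTop_cobounded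
    (tendsto_sub_mul_natCast_of_isBigO hs h)

theorem tendsto_sub_of_isBigO_add_rpowC_neg {t : ℝ} {g : ℕ → ℂ} (hs : 0 < s) (ht : 0 < t)
    (h : (fun n : ℕ => f n - (g n + c + d * rpowC (-t) n)) =O[atTop]
      fun n : ℕ => (n : ℝ) ^ (-s)) :
    Tendsto (fun n => f n - g n) atTop (𝓝 c) := by
  have hlim := ((h.trans_tendsto (tendsto_natCast_rpow_neg_atTop hs)).add_const c).add
    ((tendsto_rpowC_neg ht).const_mul d)
  rw [zero_add, mul_zero, add_zero] at hlim
  exact hlim.congr fun n => by ring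

end PowerScale

/-- Class D₁₁: the tail expansion coefficients. -/
theorem stmt2 (pm1 pm1' p₀ p₀' qm1 qm1' q₀ q₀' : ℂ)
    (hpm1 : pm1 ≠ 0) (hpm1' : pm1' ≠ 0) (hqm1 : qm1 ≠ 0) (hqm1' : qm1' ≠ 0)
    (a a' b b' : ℕ → ℂ)
    (ha : (fun n : ℕ => a (n + 1) - (pm1 * n + p₀))
      =O[atTop] fun n : ℕ => (n : ℝ) ^ (-(1 : ℝ)))
    (ha' : (fun n : ℕ => a' n - (pm1' * n + p₀'))
      =O[atTop] fun n : ℕ => (n : ℝ) ^ (-(1 : ℝ)))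
    (hb : (fun n : ℕ => b (n + 1) - (qm1 * n + q₀))
      =O[atTop] fun n : ℕ => (n : ℝ) ^ (-(1 : ℝ)))
    (hb' : (fun n : ℕ => b' n - (qm1' * n + q₀'))
      =O[atTop] fun n : ℕ => (n : ℝ) ^ (-(1 : ℝ)))
    (X : ℕ → ℂ)
    (hrec : ∀ n : ℕ, 1 ≤ n →
      (b' n * b (n + 1) + a (n + 1)) * X n + b' n * X n * X (n + 1)
        - a' n * X (n + 1) - a' n * b (n + 1) = 0)
    (τm2 τm1 τ0 τ1 : ℂ)
    (hX : (fun n : ℕ => X n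
        - (τm2 * n + τm1 * rpowC (1 / 2) n + τ0 + τ1 * rpowC (-(1 / 2)) n))
      =O[atTop] fun n : ℕ => (n : ℝ) ^ (-(1 : ℝ))) :
    τm1 = 0 ∧ (τm2 = 0 ∨ τm2 = -qm1) ∧
      (τm2 = 0 → τ0 = pm1' / qm1') ∧
      (τm2 = -qm1 → τ0 = qm1 - q₀ - pm1 / qm1') :=
  stmt2_general hqm1 hqm1' (tendsto_div_natCast_of_isBigO one_pos ha)
    (tendsto_div_natCast_of_isBigO one_pos ha') (tendsto_sub_mul_natCast_of_isBigO one_pos hb)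
    (tendsto_div_natCast_of_isBigO one_pos hb') (eventually_atTop.2 ⟨1, hrec⟩)
    (tendsto_rpowC_cobounded one_half_pos) (tendsto_rpowC_div_natCast one_half_lt_one)
    (tendsto_sub_of_isBigO_add_rpowC_neg one_pos one_half_pos hX)
end

section
/- Let p₋₂, p₋₁, p₋₁', p₀, p₀', q₀, q₀' be complex numbers with p₋₂ ≠ 0 and q₀' ≠ 0, and let a, a', b, b' : ℕ → ℂ satisfy a_{n+1} = p₋₂·n² + p₋₁·n + p₀ + O(n^{−1}), a'_n = p₋₂·n² + p₋₁'·n + p₀' + O(n^{−1}) (equal leading coefficients, the class D⁼₂₀), b_{n+1} = q₀ + O(n^{−1}), b'_n = q₀' + O(n^{−1}). Suppose X : ℕ → ℂ satisfies the tail recurrence (b'_n·b_{n+1} + a_{n+1})·X_n + b'_n·X_n·X_{n+1} − a'_n·X_{n+1} − a'_n·b_{n+1} = 0 for all n ≥ 1, and X_n = τ₋₄·n² + τ₋₃·n^{3/2} + τ₋₂·n + τ₋₁·n^{1/2} + τ₀ + O(n^{−1/2}) for some complex τ₋₄, τ₋₃, τ₋₂, τ₋₁, τ₀. Then τ₋₄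 = 0 and τ₋₃ = 0. -/
open Asymptotics Filter

/-!
With `E n = X (n + 1) - X n + b (n + 1)` the tail recurrence reads
`b' n * (X n ^ 2 + X n * E n) = a' n * E n - (a (n + 1) - a' n) * X n`.
If `X n ~ τ n ^ r` with `1 < r ≤ 2`, taking differences lowers the order of `X` enough that
`E = o(n ^ (2 r - 2))`. As `a' = O(n ^ 2)` and the leading terms of `a` and `a'` cancel, the
right-hand side is `o(n ^ (2 r))`, hence so is `X ^ 2`, and `τ = 0`. This rules out the exponent
`r = 2` and then, once the `n ^ 2` term is gone, `r = 3 / 2`.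
-/

open Topology
open scoped fwdDiff

/-- The recurrence of the odd tails `X n` of the two-variant continued fraction
`K(a n / b n + a' n / b' n)`, required only for all large `n`. -/
def SatisfiesTailRecurrence {𝕜 : Type*} [CommRing 𝕜] (a a' b b' X : ℕ → 𝕜) : Prop :=
  ∀ᶠ n in atTop, (b' n * b (n + 1) + a (n + 1)) * X n + b' n * X n * X (n + 1)
    - a' n * X (n + 1) - a' n * b (n + 1) = 0

theorem SatisfiesTailRecurrence.isLittleO {𝕜 : Type*} [NormedField 𝕜] {a a' b b' X g : ℕ → 𝕜}
    (hrec : SatisfiesTailRecurrence a a' b b' X) (hb' : (fun _ => (1 : 𝕜)) =O[atTop] b')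
    (haa' : (fun n => a (n + 1) - a' n) =o[atTop] g)
    (hXb : (fun n => Δ_[1] X n + b (n + 1)) =o[atTop] g)
    (ha'Xb : (fun n => a' n * (Δ_[1] X n + b (n + 1))) =o[atTop] fun n => g n ^ 2)
    (hX : X =O[atTop] g) : X =o[atTop] g := by
  have hXXb : (fun n => X n * (Δ_[1] X n + b (n + 1))) =o[atTop] fun n => g n ^ 2 := by
    simpa only [sq] using hX.mul_isLittleO hXb
  have haX : (fun n => (a (n + 1) - a' n) * X n) =o[atTop] fun n => g n ^ 2 := by
    simpa only [sq] using haa'.mul_isBigO hX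
  have hrec' : ∀ᶠ n in atTop, a' n * (Δ_[1] X n + b (n + 1)) - (a (n + 1) - a' n) * X n =
      b' n * (X n ^ 2 + X n * (Δ_[1] X n + b (n + 1))) := by
    filter_upwards [hrec] with n hn
    rw [fwdDiff]
    linear_combination -hn
  have hsq : (fun n => X n ^ 2 + X n * (Δ_[1] X n + b (n + 1))) =o[atTop] fun n => g n ^ 2 := by
    have h := (hb'.mul (isBigO_refl (fun n => X n ^ 2 + X n * (Δ_[1] X n + b (n + 1)))
      atTop)).trans_isLittleO ((ha'Xb.sub haX).congr' hrec' .rfl)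
    simpa only [one_mul] using h
  refine IsLittleO.of_pow (n := 2) ?_ two_ne_zero
  exact (hsq.sub hXXb).congr_left fun n => add_sub_cancel_right _ _

lemma rpowC_mul_rpowC_eventuallyEq (s t : ℝ) :
    (fun n => rpowC s n * rpowC t n) =ᶠ[atTop] rpowC (s + t) := by
  filter_upwards [eventually_gt_atTop 0] with n hn
  rw [rpowC, rpowC, rpowC, Real.rpow_add (Nat.cast_pos.2 hn), Complex.ofReal_mul]

lemma isLittleO_rpowC_rpowC {s t : ℝ} (hst : s < t) : rpowC s =o[atTop] rpowC t := by
  have h0 : rpowC (s - t) =o[atTop] fun _ => (1 : ℂ) := by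
    rw [isLittleO_one_iff]
    have h := (tendsto_rpow_neg_atTop (sub_pos.2 hst)).comp (tendsto_natCast_atTop_atTop (R := ℝ))
    rw [neg_sub] at h
    exact_mod_cast (Complex.continuous_ofReal.tendsto 0).comp h
  have h := h0.mul_isBigO (isBigO_refl (rpowC t) atTop)
  simp only [one_mul] at h
  refine h.congr' ?_ .rfl
  simpa only [sub_add_cancel] using rpowC_mul_rpowC_eventuallyEq (s - t) t

lemma isBigO_rpowC_rpowC {s t : ℝ} (hst : s ≤ t) : rpowC s =O[atTop] rpowC t := by
  obtain rfl | hst := hst.eq_or_lt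
  · exact isBigO_refl _ _
  · exact (isLittleO_rpowC_rpowC hst).isBigO

lemma isLittleO_one_rpowC {s : ℝ} (hs : 0 < s) : (fun _ => (1 : ℂ)) =o[atTop] rpowC s :=
  (isLittleO_rpowC_rpowC hs).congr_left fun n => by simp [rpowC]

lemma isBigO_fwdDiff_rpowC (r : ℝ) : Δ_[1] (rpowC r) =O[atTop] rpowC (r - 1) := by
  have hderiv : (fun x : ℝ => (1 + x) ^ r - 1) =O[𝓝 0] fun x => x := by
    have h := ((hasDerivAt_id (0 : ℝ)).const_add 1).rpow_const (p := r) (by simp)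
    simpa using h.isBigO_sub
  have hinv : (fun n : ℕ => (1 + (n : ℝ)⁻¹) ^ r - 1) =O[atTop] fun n : ℕ => (n : ℝ)⁻¹ :=
    hderiv.comp_tendsto tendsto_inv_atTop_nhds_zero_nat
  have hreal : (fun n : ℕ => ((n + 1 : ℕ) : ℝ) ^ r - (n : ℝ) ^ r) =O[atTop]
      fun n : ℕ => (n : ℝ) ^ (r - 1) := by
    refine ((isBigO_refl (fun n : ℕ => (n : ℝ) ^ r) atTop).mul hinv).congr' ?_ ?_ <;>
      filter_upwards [eventually_gt_atTop 0] with n hn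
    · have hn' : (n : ℝ) ≠ 0 := by positivity
      rw [mul_sub, mul_one, ← Real.mul_rpow (by positivity) (by positivity), mul_add, mul_one,
        mul_inv_cancel₀ hn', Nat.cast_succ]
    · rw [Real.rpow_sub_one (by positivity), div_eq_mul_inv]
  refine Complex.isBigO_ofReal_right.2 ((Complex.isBigO_ofReal_left.2 hreal).congr_left fun n => ?_)
  rw [fwdDiff, rpowC, rpowC, Complex.ofReal_sub]

lemma isBigO_rpowC_succ (s : ℝ) : (fun n => rpowC s (n + 1)) =O[atTop] rpowC s := by
  have hΔ := (isBigO_fwdDiff_rpowC s).trans (isBigO_rpowC_rpowC (sub_one_lt s).le)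
  exact (hΔ.add (isBigO_refl (rpowC s) atTop)).congr_left fun n => sub_add_cancel _ _

lemma isLittleO_fwdDiff_of_sub {f g : ℕ → ℂ} {s : ℝ}
    (hfg : (fun n => f n - g n) =o[atTop] rpowC s) (hg : Δ_[1] g =o[atTop] rpowC s) :
    Δ_[1] f =o[atTop] rpowC s := by
  have hsucc := (hfg.comp_tendsto (tendsto_add_atTop_nat 1)).trans_isBigO (isBigO_rpowC_succ s)
  refine ((hsucc.sub hfg).add hg).congr_left fun n => ?_
  simp only [fwdDiff, Function.comp_apply]
  ring

lemma isLittleO_fwdDiff_const_mul_rpowC (c : ℂ) {r s : ℝ} (h : r - 1 < s) :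
    Δ_[1] (fun n => c * rpowC r n) =o[atTop] rpowC s :=
  (((isBigO_fwdDiff_rpowC r).trans_isLittleO (isLittleO_rpowC_rpowC h)).const_mul_left c).congr_left
    fun _ => mul_sub _ _ _

lemma eq_zero_of_const_mul_rpowC_isLittleO {c : ℂ} {r : ℝ}
    (h : (fun n => c * rpowC r n) =o[atTop] rpowC r) : c = 0 := by
  by_contra hc
  refine isLittleO_irrefl (Eventually.frequently ?_) ((isLittleO_const_mul_left_iff hc).1 h)
  filter_upwards [eventually_gt_atTop 0] with n hn
  exact Complex.ofReal_ne_zero.2 (by positivity)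

theorem SatisfiesTailRecurrence.leadingCoeff_eq_zero {a a' b b' X : ℕ → ℂ} {r : ℝ} {τ σ : ℂ}
    (hrec : SatisfiesTailRecurrence a a' b b' X) (hr₁ : 1 < r) (hr₂ : r ≤ 2)
    (ha' : a' =O[atTop] rpowC 2) (haa' : (fun n => a (n + 1) - a' n) =o[atTop] rpowC r)
    (hb : (fun n => b (n + 1)) =o[atTop] rpowC (2 * r - 2))
    (hb' : (fun _ => (1 : ℂ)) =O[atTop] b')
    (hX : (fun n => X n - (τ * rpowC r n + σ * rpowC 1 n)) =o[atTop] rpowC (2 * r - 2)) :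
    τ = 0 := by
  have hr : rpowC (2 * r - 2) =O[atTop] rpowC r := isBigO_rpowC_rpowC (by linarith)
  have hXb : (fun n => Δ_[1] X n + b (n + 1)) =o[atTop] rpowC (2 * r - 2) := by
    refine (isLittleO_fwdDiff_of_sub hX ?_).add hb
    exact ((isLittleO_fwdDiff_const_mul_rpowC τ (by linarith)).add
      (isLittleO_fwdDiff_const_mul_rpowC σ (by linarith))).congr_left fun n =>
        (congrFun (fwdDiff_add 1 _ _) n).symm
  have ha'Xb : (fun n => a' n * (Δ_[1] X n + b (n + 1))) =o[atTop] fun n => rpowC r n ^ 2 := by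
    refine (ha'.mul_isLittleO hXb).congr' .rfl ?_
    filter_upwards [rpowC_mul_rpowC_eventuallyEq 2 (2 * r - 2), rpowC_mul_rpowC_eventuallyEq r r]
      with n h₁ h₂
    rw [h₁, sq, h₂]
    ring_nf
  have hXτ : (fun n => X n - τ * rpowC r n) =o[atTop] rpowC r :=
    ((hX.trans_isBigO hr).add ((isLittleO_rpowC_rpowC hr₁).const_mul_left σ)).congr_left
      fun n => by ring
  have hXO : X =O[atTop] rpowC r :=
    (hXτ.isBigO.add ((isBigO_refl (rpowC r) atTop).const_mul_left τ)).congr_left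
      fun n => sub_add_cancel _ _
  have hXo : X =o[atTop] rpowC r :=
    hrec.isLittleO hb' haa' (hXb.trans_isBigO hr) ha'Xb hXO
  exact eq_zero_of_const_mul_rpowC_isLittleO ((hXo.sub hXτ).congr_left fun n => sub_sub_cancel _ _)

lemma isBigO_rpowC_of_isBigO_rpow {f : ℕ → ℂ} {s t : ℝ} (hst : s ≤ t)
    (hf : f =O[atTop] fun n : ℕ => (n : ℝ) ^ s) : f =O[atTop] rpowC t :=
  (Complex.isBigO_ofReal_right.2 hf).trans (isBigO_rpowC_rpowC hst)

lemma isBigO_rpowC_two_of_sub_quadratic {f : ℕ → ℂ} {c₂ c₁ c₀ : ℂ} {s : ℝ} (hs : s ≤ 2)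
    (hf : (fun n : ℕ => f n - (c₂ * n ^ 2 + c₁ * n + c₀)) =O[atTop] fun n : ℕ => (n : ℝ) ^ s) :
    f =O[atTop] rpowC 2 := by
  have h₂ := (isBigO_refl (rpowC 2) atTop).const_mul_left c₂
  have h₁ := (isBigO_rpowC_rpowC one_le_two).const_mul_left c₁
  have h₀ := (isLittleO_one_rpowC two_pos).isBigO.const_mul_left c₀
  refine ((isBigO_rpowC_of_isBigO_rpow hs hf).add ((h₂.add h₁).add h₀)).congr_left fun n => ?_
  simp only [rpowC, Real.rpow_one, Real.rpow_ofNat, Complex.ofReal_natCast, Complex.ofReal_pow]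
  ring

lemma isLittleO_rpowC_sub_of_sub_quadratic {f g : ℕ → ℂ} {c₂ c₁ c₀ d₁ d₀ : ℂ} {r s : ℝ}
    (hr : 1 < r) (hs : s ≤ 1)
    (hf : (fun n : ℕ => f n - (c₂ * n ^ 2 + c₁ * n + c₀)) =O[atTop] fun n : ℕ => (n : ℝ) ^ s)
    (hg : (fun n : ℕ => g n - (c₂ * n ^ 2 + d₁ * n + d₀)) =O[atTop] fun n : ℕ => (n : ℝ) ^ s) :
    (fun n => f n - g n) =o[atTop] rpowC r := by
  have h₁ := (isBigO_refl (rpowC 1) atTop).const_mul_left (c₁ - d₁)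
  have h₀ := (isLittleO_one_rpowC one_pos).isBigO.const_mul_left (c₀ - d₀)
  have hfg := isBigO_rpowC_of_isBigO_rpow hs (hf.sub hg)
  refine IsBigO.trans_isLittleO ?_ (isLittleO_rpowC_rpowC hr)
  refine (hfg.add (h₁.add h₀)).congr_left fun n => ?_
  simp only [rpowC, Real.rpow_one, Complex.ofReal_natCast]
  ring

lemma tendsto_of_sub_isBigO_rpow_neg {f : ℕ → ℂ} {c : ℂ} {s : ℝ} (hs : 0 < s)
    (hf : (fun n => f n - c) =O[atTop] fun n : ℕ => (n : ℝ) ^ (-s)) : Tendsto f atTop (𝓝 c) :=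
  tendsto_sub_nhds_zero_iff.1 <|
    hf.trans_tendsto ((tendsto_rpow_neg_atTop hs).comp tendsto_natCast_atTop_atTop)

lemma isLittleO_rpowC_of_tendsto {f : ℕ → ℂ} {c : ℂ} {s : ℝ} (hs : 0 < s)
    (hf : Tendsto f atTop (𝓝 c)) : f =o[atTop] rpowC s :=
  (hf.isBigO_one ℂ).trans_isLittleO (isLittleO_one_rpowC hs)

lemma one_isBigO_of_tendsto {𝕜 α : Type*} [NormedField 𝕜] {l : Filter α} {f : α → 𝕜} {c : 𝕜}
    (hc : c ≠ 0) (hf : Tendsto f l (𝓝 c)) : (fun _ => (1 : 𝕜)) =O[l] f :=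
  (isBigO_const_const 1 hc l).trans ((isEquivalent_const_iff_tendsto hc).2 hf).isBigO_symm

lemma isLittleO_rpowC_one_of_expansion {X : ℕ → ℂ} {τm4 τm3 τm2 τm1 τ0 : ℂ} {s : ℝ} (hs : s < 1)
    (hX : (fun n : ℕ => X n
        - (τm4 * n ^ 2 + τm3 * rpowC (3 / 2) n + τm2 * n + τm1 * rpowC (1 / 2) n + τ0))
      =O[atTop] fun n : ℕ => (n : ℝ) ^ s) :
    (fun n => X n - (τm4 * rpowC 2 n + τm3 * rpowC (3 / 2) n + τm2 * rpowC 1 n))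
      =o[atTop] rpowC 1 := by
  have hXs := (isBigO_rpowC_of_isBigO_rpow le_rfl hX).trans_isLittleO (isLittleO_rpowC_rpowC hs)
  have h₁ := (isLittleO_rpowC_rpowC one_half_lt_one).const_mul_left τm1
  have h₀ := (isLittleO_one_rpowC one_pos).const_mul_left τ0
  refine ((hXs.add h₁).add h₀).congr_left fun n => ?_
  simp only [rpowC, Real.rpow_one, Real.rpow_ofNat, Complex.ofReal_natCast, Complex.ofReal_pow]
  ring

theorem stmt3_general {a a' b b' X : ℕ → ℂ} {τm4 τm3 τm2 : ℂ}
    (ha' : a' =O[atTop] rpowC 2) (haa' : (fun n => a (n + 1) - a' n) =o[atTop] rpowC (3 / 2))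
    (hb : (fun n => b (n + 1)) =o[atTop] rpowC 1) (hb' : (fun _ => (1 : ℂ)) =O[atTop] b')
    (hrec : SatisfiesTailRecurrence a a' b b' X)
    (hX : (fun n => X n - (τm4 * rpowC 2 n + τm3 * rpowC (3 / 2) n + τm2 * rpowC 1 n))
      =o[atTop] rpowC 1) :
    τm4 = 0 ∧ τm3 = 0 := by
  have h₁ : rpowC 1 =o[atTop] rpowC (2 * 2 - 2) := isLittleO_rpowC_rpowC (by norm_num)
  have h₃ : rpowC (3 / 2) =o[atTop] rpowC 2 := isLittleO_rpowC_rpowC (by norm_num)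
  have hτm4 : τm4 = 0 := by
    have h₃' : (fun n => τm3 * rpowC (3 / 2) n) =o[atTop] rpowC (2 * 2 - 2) :=
      (isLittleO_rpowC_rpowC (by norm_num)).const_mul_left τm3
    have hX₂ : (fun n => X n - (τm4 * rpowC 2 n + τm2 * rpowC 1 n)) =o[atTop] rpowC (2 * 2 - 2) :=
      ((hX.trans h₁).add h₃').congr_left fun n => by ring
    exact hrec.leadingCoeff_eq_zero one_lt_two le_rfl ha' (haa'.trans h₃) (hb.trans h₁) hb' hX₂
  refine ⟨hτm4, ?_⟩
  have hexp : 2 * (3 / 2) - 2 = (1 : ℝ) := by norm_num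
  simp only [hτm4, zero_mul, zero_add] at hX
  exact hrec.leadingCoeff_eq_zero (r := 3 / 2) (by norm_num) (by norm_num) ha' haa'
    (by rwa [hexp]) hb' (by rwa [hexp])

/-- Class D⁼₂₀: the tail expansion has `τ₋₄ = 0` and `τ₋₃ = 0`. -/
theorem stmt3 (pm2 pm1 pm1' p₀ p₀' q₀ q₀' : ℂ)
    (hpm2 : pm2 ≠ 0) (hq₀' : q₀' ≠ 0)
    (a a' b b' : ℕ → ℂ)
    (ha : (fun n : ℕ => a (n + 1) - (pm2 * n ^ 2 + pm1 * n + p₀))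
      =O[atTop] fun n : ℕ => (n : ℝ) ^ (-(1 : ℝ)))
    (ha' : (fun n : ℕ => a' n - (pm2 * n ^ 2 + pm1' * n + p₀'))
      =O[atTop] fun n : ℕ => (n : ℝ) ^ (-(1 : ℝ)))
    (hb : (fun n : ℕ => b (n + 1) - q₀)
      =O[atTop] fun n : ℕ => (n : ℝ) ^ (-(1 : ℝ)))
    (hb' : (fun n : ℕ => b' n - q₀')
      =O[atTop] fun n : ℕ => (n : ℝ) ^ (-(1 : ℝ)))
    (X : ℕ → ℂ)
    (hrec : ∀ n : ℕ, 1 ≤ n →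
      (b' n * b (n + 1) + a (n + 1)) * X n + b' n * X n * X (n + 1)
        - a' n * X (n + 1) - a' n * b (n + 1) = 0)
    (τm4 τm3 τm2 τm1 τ0 : ℂ)
    (hX : (fun n : ℕ => X n
        - (τm4 * n ^ 2 + τm3 * rpowC (3 / 2) n + τm2 * n
            + τm1 * rpowC (1 / 2) n + τ0))
      =O[atTop] fun n : ℕ => (n : ℝ) ^ (-(1 / 2 : ℝ))) :
    τm4 = 0 ∧ τm3 = 0 := by
  have hb₁ := isLittleO_rpowC_of_tendsto one_pos (tendsto_of_sub_isBigO_rpow_neg one_pos hb)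
  have hb'₁ := one_isBigO_of_tendsto hq₀' (tendsto_of_sub_isBigO_rpow_neg one_pos hb')
  exact stmt3_general (isBigO_rpowC_two_of_sub_quadratic (by norm_num) ha')
    (isLittleO_rpowC_sub_of_sub_quadratic (by norm_num) (by norm_num) ha ha') hb₁ hb'₁
    ((eventually_ge_atTop 1).mono hrec) (isLittleO_rpowC_one_of_expansion (by norm_num) hX)
end

section
/- Let p₋₂, p₋₁, p₋₁', p₀, p₀', q₀, q₀' be complex numbers with p₋₂ ≠ 0 and q₀' ≠ 0, and let a, a', b, b' : ℕ → ℂ satisfy a_{n+1} = p₋₂·n² + p₋₁·n + p₀ + O(n^{−1}), a'_n = p₋₂·n² + p₋₁'·n + p₀' + O(n^{−1}) (equal leading coefficients, the class D⁼₂₀), b_{n+1} = q₀ + O(n^{−1}), b'_n = q₀' + O(n^{−1}). Suppose X : ℕ → ℂ satisfies the tail recurrence (b'_n·b_{n+1} + a_{n+1})·X_n + b'_n·X_n·X_{n+1} − a'_n·X_{n+1} − a'_n·b_{n+1} = 0 for all n ≥ 1, and X_n = τ₋₂·n + τ₋₁·n^{1/2} + τ₀ + O(n^{−1/2}) for some complex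 τ₋₂, τ₋₁, τ₀. Then the beginning coefficient τ₋₂ satisfies the quadratic equation q₀'·τ₋₂² + (p₋₁ − p₋₁' − p₋₂)·τ₋₂ − p₋₂·q₀ = 0. -/
/-!
Since `a` and `a'` have the same leading coefficient, the recurrence divided by `n ^ 2` involves
them only through `(a (n + 1) - a' n) / n`, multiplied by `X n / n`, and through `a' n / n ^ 2`,
multiplied by `X (n + 1) - X n` and by `b (n + 1)`. The increments `X (n + 1) - X n` converge to the
coefficient of `n` in the expansion of `X`, because `(n + 1) ^ s - n ^ s → 0` for `s < 1`, and
`X n / n` has the same limit by Cesàro averaging. The quadratic equation is the limit of the divided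
recurrence.
-/

open Asymptotics Filter

open Topology

theorem tendsto_zero_of_isBigO_rpow_neg {E : Type*} [NormedAddCommGroup E] {u : ℕ → E} {s : ℝ}
    (hs : 0 < s) (hu : u =O[atTop] fun n : ℕ => (n : ℝ) ^ (-s)) : Tendsto u atTop (𝓝 0) :=
  hu.trans_tendsto ((tendsto_rpow_neg_atTop hs).comp tendsto_natCast_atTop_atTop)

section AsymptoticExpansion

variable {𝕜 : Type*} [RCLike 𝕜]

theorem tendsto_div_natCast_of_tendsto_sub_mul {u : ℕ → 𝕜} {c d : 𝕜}
    (hu : Tendsto (fun n : ℕ => u n - c * n) atTop (𝓝 d)) :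
    Tendsto (fun n : ℕ => u n / n) atTop (𝓝 c) := by
  have hlim := (hu.mul (tendsto_inv_atTop_nhds_zero_nat (𝕜 := 𝕜))).add_const c
  rw [mul_zero, zero_add] at hlim
  refine hlim.congr' ?_
  filter_upwards [eventually_ne_atTop 0] with n hn
  field_simp
  ring

theorem tendsto_div_sq_of_tendsto_sub_quadratic {u : ℕ → 𝕜} {c₂ c₁ c₀ : 𝕜}
    (hu : Tendsto (fun n : ℕ => u n - (c₂ * n ^ 2 + c₁ * n + c₀)) atTop (𝓝 0)) :
    Tendsto (fun n : ℕ => u n / n ^ 2) atTop (𝓝 c₂) := by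
  have hlinear : Tendsto (fun n : ℕ => (u n - c₂ * n ^ 2) / n) atTop (𝓝 c₁) :=
    tendsto_div_natCast_of_tendsto_sub_mul (d := 0 + c₀) <|
      (hu.add_const c₀).congr fun n => by ring
  have hquot : Tendsto (fun n : ℕ => u n / n / n) atTop (𝓝 c₂) := by
    refine tendsto_div_natCast_of_tendsto_sub_mul (d := c₁) (hlinear.congr' ?_)
    filter_upwards [eventually_ne_atTop 0] with n hn
    field_simp
  exact hquot.congr fun n => by rw [div_div, ← sq]

theorem tendsto_sub_div_of_tendsto_sub_quadratic {u v : ℕ → 𝕜} {c₂ c₁ c₀ d₁ d₀ : 𝕜}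
    (hu : Tendsto (fun n : ℕ => u n - (c₂ * n ^ 2 + c₁ * n + c₀)) atTop (𝓝 0))
    (hv : Tendsto (fun n : ℕ => v n - (c₂ * n ^ 2 + d₁ * n + d₀)) atTop (𝓝 0)) :
    Tendsto (fun n : ℕ => (u n - v n) / n) atTop (𝓝 (c₁ - d₁)) :=
  tendsto_div_natCast_of_tendsto_sub_mul (d := 0 - 0 + (c₀ - d₀)) <|
    ((hu.sub hv).add_const (c₀ - d₀)).congr fun n => by ring

theorem tendsto_div_natCast_of_tendsto_succ_sub {X : ℕ → 𝕜} {τ : 𝕜}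
    (hX : Tendsto (fun n => X (n + 1) - X n) atTop (𝓝 τ)) :
    Tendsto (fun n : ℕ => X n / n) atTop (𝓝 τ) := by
  have hmean : Tendsto (fun n : ℕ => (n : ℝ)⁻¹ • (X n - X 0)) atTop (𝓝 τ) :=
    hX.cesaro_smul.congr fun n => by rw [Finset.sum_range_sub]
  have hlim := hmean.add (tendsto_const_div_atTop_nhds_zero_nat (X 0))
  rw [add_zero] at hlim
  refine hlim.congr fun n => ?_
  rw [RCLike.real_smul_eq_coe_mul, RCLike.ofReal_inv, RCLike.ofReal_natCast]
  ring

end AsymptoticExpansion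

theorem tendsto_rpow_add_one_sub_rpow {s : ℝ} (hs : s < 1) :
    Tendsto (fun x : ℝ => (x + 1) ^ s - x ^ s) atTop (𝓝 0) := by
  have hderiv : HasDerivAt (fun x : ℝ => x ^ s) s 1 := by
    simpa using Real.hasDerivAt_rpow_const (x := 1) (p := s) (Or.inl one_ne_zero)
  have hslope : Tendsto (fun x : ℝ => x * ((1 + x⁻¹) ^ s - 1)) atTop (𝓝 s) := by
    simpa [Function.comp_def] using
      hderiv.tendsto_slope_zero_right.comp tendsto_inv_atTop_nhdsGT_zero
  have hlim := (tendsto_rpow_neg_atTop (sub_pos.2 hs)).mul hslope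
  rw [zero_mul] at hlim
  refine hlim.congr' ?_
  filter_upwards [eventually_gt_atTop 0] with x hx
  calc x ^ (-(1 - s)) * (x * ((1 + x⁻¹) ^ s - 1))
      = x ^ s * ((1 + x⁻¹) ^ s - 1) := by
        rw [neg_sub, Real.rpow_sub_one hx.ne']
        field_simp
    _ = (x * (1 + x⁻¹)) ^ s - x ^ s := by
        rw [Real.mul_rpow hx.le (by positivity)]
        ring
    _ = (x + 1) ^ s - x ^ s := by
        rw [mul_add, mul_one, mul_inv_cancel₀ hx.ne']

theorem tendsto_rpowC_succ_sub {s : ℝ} (hs : s < 1) :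
    Tendsto (fun n : ℕ => rpowC s (n + 1) - rpowC s n) atTop (𝓝 0) := by
  have hreal := (tendsto_rpow_add_one_sub_rpow hs).comp (tendsto_natCast_atTop_atTop (R := ℝ))
  simpa [Function.comp_def, rpowC] using hreal.ofReal

theorem tendsto_succ_sub_of_tendsto_sub_rpowC {X : ℕ → ℂ} {τ σ ρ : ℂ} {s : ℝ} (hs : s < 1)
    (hX : Tendsto (fun n : ℕ => X n - (τ * n + σ * rpowC s n + ρ)) atTop (𝓝 0)) :
    Tendsto (fun n => X (n + 1) - X n) atTop (𝓝 τ) := by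
  have hlim := ((((tendsto_add_atTop_iff_nat 1).2 hX).sub hX).add
    ((tendsto_rpowC_succ_sub hs).const_mul σ)).const_add τ
  rw [sub_zero, mul_zero, add_zero, add_zero] at hlim
  refine hlim.congr fun n => ?_
  push_cast
  ring

theorem stmt4_general {𝕜 : Type*} [RCLike 𝕜] {p δ q q' τ : 𝕜} {a a' b b' X : ℕ → 𝕜}
    (ha : Tendsto (fun n : ℕ => (a (n + 1) - a' n) / n) atTop (𝓝 δ))
    (ha' : Tendsto (fun n : ℕ => a' n / n ^ 2) atTop (𝓝 p))
    (hb : Tendsto (fun n => b (n + 1)) atTop (𝓝 q)) (hb' : Tendsto b' atTop (𝓝 q'))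
    (hrec : ∀ᶠ n in atTop,
      (b' n * b (n + 1) + a (n + 1)) * X n + b' n * X n * X (n + 1)
        - a' n * X (n + 1) - a' n * b (n + 1) = 0)
    (hX : Tendsto (fun n => X (n + 1) - X n) atTop (𝓝 τ)) :
    q' * τ ^ 2 + (δ - p) * τ - p * q = 0 := by
  have hinv := tendsto_inv_atTop_nhds_zero_nat (𝕜 := 𝕜)
  have hXdiv := tendsto_div_natCast_of_tendsto_succ_sub hX
  have hXsucc : Tendsto (fun n : ℕ => X (n + 1) / n) atTop (𝓝 τ) := by
    simpa [← div_eq_mul_inv, ← add_div] using hXdiv.add (hX.mul hinv)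
  have hlim : Tendsto (fun n : ℕ => b' n * b (n + 1) * (X n / n) * (n : 𝕜)⁻¹
        + (a (n + 1) - a' n) / n * (X n / n) + b' n * (X n / n) * (X (n + 1) / n)
        - a' n / n ^ 2 * (X (n + 1) - X n) - a' n / n ^ 2 * b (n + 1)) atTop
      (𝓝 (q' * q * τ * 0 + δ * τ + q' * τ * τ - p * τ - p * q)) :=
    ((((((hb'.mul hb).mul hXdiv).mul hinv).add (ha.mul hXdiv)).add
      ((hb'.mul hXdiv).mul hXsucc)).sub (ha'.mul hX)).sub (ha'.mul hb)
  have hzero : q' * q * τ * 0 + δ * τ + q' * τ * τ - p * τ - p * q = 0 := by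
    refine tendsto_nhds_unique (hlim.congr' ?_) tendsto_const_nhds
    filter_upwards [hrec, eventually_ne_atTop 0] with n hrec_n hn
    field_simp
    linear_combination hrec_n
  linear_combination hzero

/-- Class D⁼₂₀: the beginning coefficient `τ₋₂` satisfies the quadratic equation
`q₀' τ₋₂² + (p₋₁ − p₋₁' − p₋₂) τ₋₂ − p₋₂ q₀ = 0`. -/
theorem stmt4 (pm2 pm1 pm1' p₀ p₀' q₀ q₀' : ℂ)
    (hpm2 : pm2 ≠ 0) (hq₀' : q₀' ≠ 0)
    (a a' b b' : ℕ → ℂ)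
    (ha : (fun n : ℕ => a (n + 1) - (pm2 * n ^ 2 + pm1 * n + p₀))
      =O[atTop] fun n : ℕ => (n : ℝ) ^ (-(1 : ℝ)))
    (ha' : (fun n : ℕ => a' n - (pm2 * n ^ 2 + pm1' * n + p₀'))
      =O[atTop] fun n : ℕ => (n : ℝ) ^ (-(1 : ℝ)))
    (hb : (fun n : ℕ => b (n + 1) - q₀)
      =O[atTop] fun n : ℕ => (n : ℝ) ^ (-(1 : ℝ)))
    (hb' : (fun n : ℕ => b' n - q₀')
      =O[atTop] fun n : ℕ => (n : ℝ) ^ (-(1 : ℝ)))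
    (X : ℕ → ℂ)
    (hrec : ∀ n : ℕ, 1 ≤ n →
      (b' n * b (n + 1) + a (n + 1)) * X n + b' n * X n * X (n + 1)
        - a' n * X (n + 1) - a' n * b (n + 1) = 0)
    (τm2 τm1 τ0 : ℂ)
    (hX : (fun n : ℕ => X n - (τm2 * n + τm1 * rpowC (1 / 2) n + τ0))
      =O[atTop] fun n : ℕ => (n : ℝ) ^ (-(1 / 2 : ℝ))) :
    q₀' * τm2 ^ 2 + (pm1 - pm1' - pm2) * τm2 - pm2 * q₀ = 0 := by
  have ha₀ := tendsto_zero_of_isBigO_rpow_neg one_pos ha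
  have ha₀' := tendsto_zero_of_isBigO_rpow_neg one_pos ha'
  have hb₀ := tendsto_zero_of_isBigO_rpow_neg one_pos hb
  have hb₀' := tendsto_zero_of_isBigO_rpow_neg one_pos hb'
  have hX₀ := tendsto_zero_of_isBigO_rpow_neg one_half_pos hX
  exact stmt4_general (tendsto_sub_div_of_tendsto_sub_quadratic ha₀ ha₀')
    (tendsto_div_sq_of_tendsto_sub_quadratic ha₀') (tendsto_sub_nhds_zero_iff.1 hb₀)
    (tendsto_sub_nhds_zero_iff.1 hb₀') (eventually_atTop.2 ⟨1, hrec⟩)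
    (tendsto_succ_sub_of_tendsto_sub_rpowC one_half_lt_one hX₀)
end

section
/- Let p₋₂ ∈ ℂ with p₋₂ ≠ 0 and let w ∈ ℂ be such that (w/p₋₂)² is not a nonpositive real number (equivalently, Re(w/p₋₂) ≠ 0). Then for every integer m ≥ −1, one has (1 + m/2)·p₋₂ + sgn(Re(w/p₋₂))·w ≠ 0. In particular, if α, β, γ ∈ ℂ with α ≠ 0, w² = β² − 4αγ, and τ := (−β + sgn(Re(w/p₋₂))·w)/(2α), and if p₋₁ − p₋₁' = β + p₋₂ + 2ατ − 2ατ (i.e., setting β = p₋₁ − p₋₁' − p₋₂), then 2τα + p₋₁ − p₋₁' + (m/2)·p₋₂ ≠ 0 for every integer m ≥ −1. -/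
open Complex

/-!
After division by `p₋₂` the sign makes the second summand contribute `|Re(w/p₋₂)|` to the real
part, while the first contributes `1 + Re(m)/2 > 0`, so the sum cannot vanish. The coefficient
`2τα + p₋₁ − p₋₁' + (m/2)p₋₂` is the same sum, because the quadratic formula gives
`2ατ + β = sgn(Re(w/p₋₂))·w`.
-/

theorem add_sign_re_mul_self_ne_zero {c : ℂ} (hc : 0 < c.re) (z : ℂ) :
    c + (Real.sign z.re : ℂ) * z ≠ 0 := by
  refine ne_zero_of_re_pos ?_
  rw [add_re, re_ofReal_mul]
  exact add_pos_of_pos_of_nonneg hc (Real.sign_mul_nonneg z.re)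

theorem mul_add_sign_re_div_mul_ne_zero {c p : ℂ} (hc : 0 < c.re) (hp : p ≠ 0) (w : ℂ) :
    c * p + (Real.sign (w / p).re : ℂ) * w ≠ 0 := by
  have hfactor : c * p + (Real.sign (w / p).re : ℂ) * w
      = (c + (Real.sign (w / p).re : ℂ) * (w / p)) * p := by
    rw [add_mul, mul_assoc, div_mul_cancel₀ w hp]
  rw [hfactor]
  exact mul_ne_zero (add_sign_re_mul_self_ne_zero hc (w / p)) hp

theorem two_mul_quadratic_root_mul_add {K : Type*} [Field K] [NeZero (2 : K)] {α : K}
    (hα : α ≠ 0) (β δ : K) : 2 * ((-β + δ) / (2 * α)) * α + β = δ := by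
  rw [mul_right_comm, mul_div_cancel₀ _ (mul_ne_zero two_ne_zero hα)]
  ring

theorem neg_two_lt_re_intCast {m : ℤ} (hm : -1 ≤ m) : -2 < (m : ℂ).re := by
  rw [intCast_re]
  exact_mod_cast (by lia : -2 < m)

theorem stmt8_general (pm2 w : ℂ) (hpm2 : pm2 ≠ 0) :
    (∀ m : ℂ, -2 < m.re →
      (1 + m / 2) * pm2 + (Real.sign ((w / pm2).re) : ℂ) * w ≠ 0) ∧
    (∀ α β γ : ℂ, α ≠ 0 → w ^ 2 = β ^ 2 - 4 * α * γ →
      ∀ pm1 pm1' : ℂ, pm1 - pm1' = β + pm2 →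
        ∀ m : ℂ, -2 < m.re →
          2 * ((-β + (Real.sign ((w / pm2).re) : ℂ) * w) / (2 * α)) * α
            + pm1 - pm1' + m / 2 * pm2 ≠ 0) := by
  have hsum (m : ℂ) (hm : -2 < m.re) :
      (1 + m / 2) * pm2 + (Real.sign ((w / pm2).re) : ℂ) * w ≠ 0 := by
    have hc : 0 < (1 + m / 2).re := by
      rw [add_re, one_re, div_ofNat_re]
      linarith
    exact mul_add_sign_re_div_mul_ne_zero hc hpm2 w
  refine ⟨hsum, fun α β _ hα _ pm1 pm1' hβ m hm hzero => hsum m hm ?_⟩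
  have hroot := two_mul_quadratic_root_mul_add hα β ((Real.sign ((w / pm2).re) : ℂ) * w)
  linear_combination hzero - hroot - hβ

/-- Nonvanishing of `(1 + m/2)p₋₂ + sgn(Re(w/p₋₂))·w` for integers `m ≥ −1`, and
consequently of the coefficient `2τα + p₋₁ − p₋₁' + (m/2)p₋₂` where
`τ = (−β + sgn(Re(w/p₋₂))·w)/(2α)` is the selected root of `ατ² + βτ + γ = 0`
with `β = p₋₁ − p₋₁' − p₋₂`. -/
theorem stmt8 (pm2 w : ℂ) (hpm2 : pm2 ≠ 0)
    (hw : ¬ ∃ r : ℝ, r ≤ 0 ∧ (w / pm2) ^ 2 = (r : ℂ)) :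
    (∀ m : ℤ, -1 ≤ m →
      (1 + (m : ℂ) / 2) * pm2 + (Real.sign ((w / pm2).re) : ℂ) * w ≠ 0) ∧
    (∀ α β γ : ℂ, α ≠ 0 → w ^ 2 = β ^ 2 - 4 * α * γ →
      ∀ pm1 pm1' : ℂ, pm1 - pm1' = β + pm2 →
        ∀ m : ℤ, -1 ≤ m →
          2 * ((-β + (Real.sign ((w / pm2).re) : ℂ) * w) / (2 * α)) * α
            + pm1 - pm1' + (m : ℂ) / 2 * pm2 ≠ 0) := by
  obtain ⟨hsum, hcoeff⟩ := stmt8_general pm2 w hpm2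
  exact ⟨fun m hm => hsum m (neg_two_lt_re_intCast hm), fun α β γ hα hdisc pm1 pm1' hβ m hm =>
    hcoeff α β γ hα hdisc pm1 pm1' hβ m (neg_two_lt_re_intCast hm)⟩
end

section
/- Let p₋₂, p₋₁, p₀, q₀ be complex numbers with p₋₂ ≠ 0, and let a, b : ℕ → ℂ satisfy a_{n+1} = p₋₂·n² + p₋₁·n + p₀ + O(n^{−1}) and b_{n+1} = q₀ + O(n^{−1}). Let u : ℕ → ℂ and complex numbers τ₋₂ ≠ 0, τ₀ satisfy u_n = τ₋₂·n + τ₀ + O(n^{−1}) as n → ∞ (so in particular b_{n+1} + u_{n+1} ≠ 0 for all sufficiently large n). Then the product sequence I_n := a_{n+1}·u_n/(b_{n+1} + u_{n+1}) satisfies I_n = p₋₂·n² + (p₋₁ − p₋₂ − p₋₂·q₀/τ₋₂)·n + O(1) as n → ∞. -/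
open Asymptotics Filter

/-!
With `d = b_{n+1} + u_{n+1}` and `δ = d - u_n`, the tail product is
`I_n = a_{n+1} - a_{n+1} (δ / d)`. If `u_n = τ n + O(1)` has increments `τ + O(n⁻¹)`, then
`δ = q₀ + τ + O(n⁻¹)`, hence `n (δ / d) = (q₀ + τ) / τ + O(n⁻¹)`. Multiplying by
`a_{n+1} = p n² + O(n)` gives `a_{n+1} (δ / d) = (p + p q₀ / τ) n + O(1)`.
-/

section CoboundedScale

theorem isBigO_one_mul_of_isBigO_inv {α R : Type*} [SeminormedRing R] {l : Filter α}
    {f g : α → R} {h : α → ℝ} (hf : f =O[l] h) (hg : g =O[l] fun i => (h i)⁻¹) :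
    (fun i => f i * g i) =O[l] fun _ => (1 : ℝ) :=
  (hf.mul hg).trans <| .of_bound 1 <| .of_forall fun i => by
    simpa only [norm_mul, norm_inv, norm_one, mul_one] using mul_inv_le_one

variable {α 𝕜 : Type*} [NormedField 𝕜] {l : Filter α} {x a d u δ : α → 𝕜} {c p r τ : 𝕜}

theorem isLittleO_const_of_tendsto_cobounded (hx : Tendsto x l (Bornology.cobounded 𝕜)) (C : ℝ) :
    (fun _ => C) =o[l] x :=
  isLittleO_const_left.2 <| .inr <| tendsto_norm_atTop_iff_cobounded.2 hx

theorem isBigO_one_inv_norm_of_tendsto_cobounded (hx : Tendsto x l (Bornology.cobounded 𝕜)) :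
    (fun i => ‖x i‖⁻¹) =O[l] fun _ => (1 : ℝ) :=
  (tendsto_norm_atTop_iff_cobounded.2 hx).inv_tendsto_atTop.isBigO_one ℝ

theorem eventually_ne_zero_of_isTheta (hx : Tendsto x l (Bornology.cobounded 𝕜))
    (hd : d =Θ[l] x) : ∀ᶠ i in l, d i ≠ 0 := by
  filter_upwards [hd.eq_zero_iff, hx.eventually_ne_cobounded 0] with i hi hxi
  exact mt hi.1 hxi

theorem isTheta_of_sub_mul_isBigO_one (hx : Tendsto x l (Bornology.cobounded 𝕜)) (hτ : τ ≠ 0)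
    (hd : (fun i => d i - τ * x i) =O[l] fun _ => (1 : ℝ)) : d =Θ[l] x := by
  have hτx : (fun i => τ * x i) =Θ[l] x := (isTheta_const_mul_left hτ).2 (isTheta_refl x l)
  have hequiv : d ~[l] fun i => τ * x i :=
    (hd.trans_isLittleO (isLittleO_const_of_tendsto_cobounded hx 1)).trans_isTheta hτx.symm
  exact hequiv.isTheta.trans hτx

theorem isBigO_mul_div_sub_div (hx : Tendsto x l (Bornology.cobounded 𝕜)) (hτ : τ ≠ 0)
    (hδ : (fun i => δ i - c) =O[l] fun i => ‖x i‖⁻¹)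
    (hd : (fun i => d i - τ * x i) =O[l] fun _ => (1 : ℝ)) :
    (fun i => x i * (δ i / d i) - c / τ) =O[l] fun i => ‖x i‖⁻¹ := by
  have hdx : d =Θ[l] x := isTheta_of_sub_mul_isBigO_one hx hτ hd
  have hnum : (fun i => x i * (δ i - c) - c / τ * (d i - τ * x i)) =O[l] fun _ => (1 : ℝ) :=
    (isBigO_one_mul_of_isBigO_inv (isBigO_refl x l).norm_right hδ).sub (hd.const_mul_left _)
  refine (hnum.mul hdx.norm_right.inv.isBigO).congr' ?_ (.of_eq <| funext fun i => one_mul _)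
  filter_upwards [eventually_ne_zero_of_isTheta hx hdx] with i hdi
  field_simp
  ring

theorem isBigO_mul_div_sub_mul (hx : Tendsto x l (Bornology.cobounded 𝕜)) (hτ : τ ≠ 0)
    (ha : (fun i => a i - p * x i ^ 2) =O[l] x)
    (hδ : (fun i => δ i - c) =O[l] fun i => ‖x i‖⁻¹)
    (hd : (fun i => d i - τ * x i) =O[l] fun _ => (1 : ℝ)) :
    (fun i => a i * (δ i / d i) - p * (c / τ) * x i) =O[l] fun _ => (1 : ℝ) := by
  have hδ_one : δ =O[l] fun _ => (1 : ℝ) := by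
    simpa only [sub_add_cancel] using
      (hδ.trans (isBigO_one_inv_norm_of_tendsto_cobounded hx)).add
        (isBigO_const_const c one_ne_zero l)
  have hdiv : (fun i => δ i / d i) =O[l] fun i => ‖x i‖⁻¹ := by
    simpa only [div_eq_mul_inv, one_mul] using
      hδ_one.mul (isTheta_of_sub_mul_isBigO_one hx hτ hd).norm_right.inv.isBigO
  have hlower : (fun i => (a i - p * x i ^ 2) * (δ i / d i)) =O[l] fun _ => (1 : ℝ) :=
    isBigO_one_mul_of_isBigO_inv ha.norm_right hdiv
  have hleading : (fun i => x i * (x i * (δ i / d i) - c / τ)) =O[l] fun _ => (1 : ℝ) :=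
    isBigO_one_mul_of_isBigO_inv (isBigO_refl x l).norm_right (isBigO_mul_div_sub_div hx hτ hδ hd)
  exact (hlower.add (hleading.const_mul_left p)).congr_left fun i => by ring

theorem isBigO_mul_div_sub_quadratic (hx : Tendsto x l (Bornology.cobounded 𝕜)) (hτ : τ ≠ 0)
    (ha : (fun i => a i - (p * x i ^ 2 + r * x i)) =O[l] fun _ => (1 : ℝ))
    (hu : (fun i => u i - τ * x i) =O[l] fun _ => (1 : ℝ))
    (hδ : (fun i => d i - u i - c) =O[l] fun i => ‖x i‖⁻¹) :
    (fun i => a i * u i / d i - (p * x i ^ 2 + (r - p * (c / τ)) * x i))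
      =O[l] fun _ => (1 : ℝ) := by
  have hd : (fun i => d i - τ * x i) =O[l] fun _ => (1 : ℝ) :=
    (((hδ.trans (isBigO_one_inv_norm_of_tendsto_cobounded hx)).add hu).add
      (isBigO_const_const c one_ne_zero l)).congr_left fun i => by ring
  have ha_lead : (fun i => a i - p * x i ^ 2) =O[l] x :=
    ((ha.trans_isLittleO (isLittleO_const_of_tendsto_cobounded hx 1)).isBigO.add
      ((isBigO_refl x l).const_mul_left r)).congr_left fun i => by ring
  refine (ha.sub (isBigO_mul_div_sub_mul hx hτ ha_lead hδ hd)).congr' ?_ .rfl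
  filter_upwards [eventually_ne_zero_of_isTheta hx
    (isTheta_of_sub_mul_isBigO_one hx hτ hd)] with i hdi
  field_simp
  ring

end CoboundedScale

section Sequences

theorem isBigO_natCast_rpow_comp_add_one {E : Type*} [Norm E] {f : ℕ → E} {s : ℝ}
    (hf : f =O[atTop] fun n : ℕ => (n : ℝ) ^ s) :
    (fun n => f (n + 1)) =O[atTop] fun n : ℕ => (n : ℝ) ^ s := by
  have hsucc : (fun n : ℕ => ((n + 1 : ℕ) : ℝ)) =Θ[atTop] fun n : ℕ => (n : ℝ) :=
    isTheta_of_sub_mul_isBigO_one tendsto_natCast_atTop_cobounded one_ne_zero <| by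
      simpa using isBigO_refl (fun _ : ℕ => (1 : ℝ)) atTop
  exact (hf.comp_tendsto (tendsto_add_atTop_nat 1)).trans_isTheta <|
    hsucc.rpow (.of_forall fun n => Nat.cast_nonneg _) (.of_forall fun n => Nat.cast_nonneg _)

theorem isBigO_increment_sub {R : Type*} [SeminormedRing R] {u : ℕ → R} {τ c : R} {s : ℝ}
    (hu : (fun n : ℕ => u n - (τ * n + c)) =O[atTop] fun n : ℕ => (n : ℝ) ^ s) :
    (fun n => u (n + 1) - u n - τ) =O[atTop] fun n : ℕ => (n : ℝ) ^ s :=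
  ((isBigO_natCast_rpow_comp_add_one hu).sub hu).congr_left fun n => by
    push_cast
    noncomm_ring

theorem isBigO_one_natCast_rpow_neg {s : ℝ} (hs : 0 < s) :
    (fun n : ℕ => (n : ℝ) ^ (-s)) =O[atTop] fun _ => (1 : ℝ) :=
  ((tendsto_rpow_neg_atTop hs).comp tendsto_natCast_atTop_atTop).isBigO_one ℝ

theorem isBigO_one_sub_of_sub_add_const {E : Type*} [SeminormedAddCommGroup E] {f g : ℕ → E}
    {c : E} {s : ℝ} (hs : 0 < s)
    (hf : (fun n => f n - (g n + c)) =O[atTop] fun n : ℕ => (n : ℝ) ^ (-s)) :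
    (fun n => f n - g n) =O[atTop] fun _ => (1 : ℝ) :=
  ((hf.trans (isBigO_one_natCast_rpow_neg hs)).add
    (isBigO_const_const c one_ne_zero atTop)).congr_left fun n => by abel

theorem stmt10_general {𝕜 : Type*} [NormedField 𝕜] [NormSMulClass ℤ 𝕜] {p r q τ : 𝕜}
    {a b u : ℕ → 𝕜} (hτ : τ ≠ 0)
    (ha : (fun n : ℕ => a (n + 1) - (p * n ^ 2 + r * n)) =O[atTop] fun _ => (1 : ℝ))
    (hb : (fun n => b (n + 1) - q) =O[atTop] fun n : ℕ => (n : ℝ) ^ (-(1 : ℝ)))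
    (hu : (fun n : ℕ => u n - τ * n) =O[atTop] fun _ => (1 : ℝ))
    (hu_succ : (fun n => u (n + 1) - u n - τ) =O[atTop] fun n : ℕ => (n : ℝ) ^ (-(1 : ℝ))) :
    (fun n : ℕ => a (n + 1) * u n / (b (n + 1) + u (n + 1))
        - (p * n ^ 2 + (r - p - p * q / τ) * n)) =O[atTop] fun _ => (1 : ℝ) := by
  have hδ : (fun n => b (n + 1) + u (n + 1) - u n - (q + τ))
      =O[atTop] fun n : ℕ => ‖(n : 𝕜)‖⁻¹ := by
    simp only [norm_natCast, ← Real.rpow_neg_one]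
    exact (hb.add hu_succ).congr_left fun n => by ring
  have hcoeff : r - p * ((q + τ) / τ) = r - p - p * q / τ := by
    field_simp
    ring
  simpa only [hcoeff] using
    isBigO_mul_div_sub_quadratic tendsto_natCast_atTop_cobounded hτ ha hu hδ

end Sequences

/-- Class D⁼₂₀: asymptotics of the tail product
`I_n = a_{n+1} u_n / (b_{n+1} + u_{n+1})`. -/
theorem stmt10 (pm2 pm1 p₀ q₀ : ℂ) (hpm2 : pm2 ≠ 0)
    (a b : ℕ → ℂ)
    (ha : (fun n : ℕ => a (n + 1) - (pm2 * n ^ 2 + pm1 * n + p₀))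
      =O[atTop] fun n : ℕ => (n : ℝ) ^ (-(1 : ℝ)))
    (hb : (fun n : ℕ => b (n + 1) - q₀)
      =O[atTop] fun n : ℕ => (n : ℝ) ^ (-(1 : ℝ)))
    (u : ℕ → ℂ) (τm2 τ0 : ℂ) (hτm2 : τm2 ≠ 0)
    (hu : (fun n : ℕ => u n - (τm2 * n + τ0))
      =O[atTop] fun n : ℕ => (n : ℝ) ^ (-(1 : ℝ))) :
    (fun n : ℕ => a (n + 1) * u n / (b (n + 1) + u (n + 1))
        - (pm2 * n ^ 2 + (pm1 - pm2 - pm2 * q₀ / τm2) * n))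
      =O[atTop] fun _ : ℕ => (1 : ℝ) :=
  stmt10_general hτm2 (isBigO_one_sub_of_sub_add_const one_pos ha) hb
    (isBigO_one_sub_of_sub_add_const one_pos hu) (isBigO_increment_sub hu)
end

section
/- Let p₋₂, p₋₁, p₀, q₋₁, q₀ be complex numbers with p₋₂ ≠ 0 and q₋₁ ≠ 0, and let a, b : ℕ → ℂ satisfy a_{n+1} = p₋₂·n² + p₋₁·n + p₀ + O(n^{−1}) and b_{n+1} = q₋₁·n + q₀ + O(n^{−1}). Let u : ℕ → ℂ and complex numbers τ₋₂, τ₀ with τ₋₂ + q₋₁ ≠ 0 satisfy u_n = τ₋₂·n + τ₀ + O(n^{−1/2}) as n → ∞ (so in particular b_{n+1} + u_{n+1} ≠ 0 for all sufficiently large n). Then the product sequence I_n := a_{n+1}·u_n/(b_{n+1} + u_{n+1}) satisfies I_n = (τ₋₂·p₋₂/(τ₋₂ + q₋₁))·n² + O(n^{3/2}) as n → ∞. -/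
open Asymptotics Filter

/-!
If `y = t ν + O(1)` and `z = r ν + O(1)` with `r ≠ 0` and `ν → ∞`, then `y - (t / r) z` is bounded,
and dividing it by `z ~ r ν` gives `y / z = t / r + O(ν⁻¹)`. Multiplying by `x = p ν² + O(ν)` then
costs only `O(ν)`. The theorem is the case `ν = n`, in which the shift in `u_{n+1}` and all
lower-order coefficients are absorbed by the error terms.
-/

section Quotient

open Bornology (cobounded)

variable {α 𝕜 : Type*} [NormedField 𝕜] {l : Filter α} {ν x y z : α → 𝕜} {p t r : 𝕜}

theorem one_isLittleO_of_tendsto_cobounded (hν : Tendsto ν l (cobounded 𝕜)) :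
    (fun _ => (1 : 𝕜)) =o[l] ν :=
  (isLittleO_const_id_cobounded 1).comp_tendsto hν

theorem isEquivalent_const_mul_of_sub_isBigO_one (hν : Tendsto ν l (cobounded 𝕜)) (hr : r ≠ 0)
    (hz : (fun i => z i - r * ν i) =O[l] fun _ => (1 : 𝕜)) :
    z ~[l] fun i => r * ν i :=
  (hz.trans_isLittleO (one_isLittleO_of_tendsto_cobounded hν)).trans_isBigO
    (isBigO_self_const_mul hr ν l)

theorem div_sub_div_isBigO_inv (hν : Tendsto ν l (cobounded 𝕜)) (hr : r ≠ 0)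
    (hy : (fun i => y i - t * ν i) =O[l] fun _ => (1 : 𝕜))
    (hz : (fun i => z i - r * ν i) =O[l] fun _ => (1 : 𝕜)) :
    (fun i => y i / z i - t / r) =O[l] fun i => (ν i)⁻¹ := by
  have hz_equiv := isEquivalent_const_mul_of_sub_isBigO_one hν hr hz
  have hz_ne : ∀ᶠ i in l, z i ≠ 0 := by
    filter_upwards [hz_equiv.isBigO_symm.eq_zero_imp, hν.eventually_ne_cobounded 0]
      with i hzero hνi hzi
    exact mul_ne_zero hr hνi (hzero hzi)
  have hz_inv : (fun i => (z i)⁻¹) =O[l] fun i => (ν i)⁻¹ := by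
    refine hz_equiv.inv.isBigO.trans ?_
    simpa only [Pi.inv_def, mul_inv] using isBigO_const_mul_self r⁻¹ (fun i => (ν i)⁻¹) l
  have hnum : (fun i => y i - t / r * z i) =O[l] fun _ => (1 : 𝕜) :=
    (hy.sub (hz.const_mul_left (t / r))).congr_left fun i => by field_simp; ring
  refine (hnum.mul hz_inv).congr' ?_ (.of_eq <| by simp only [one_mul])
  filter_upwards [hz_ne] with i hi
  field_simp

theorem mul_div_sub_const_mul_sq_isBigO (hν : Tendsto ν l (cobounded 𝕜)) (hr : r ≠ 0)
    (hx : (fun i => x i - p * ν i ^ 2) =O[l] ν)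
    (hy : (fun i => y i - t * ν i) =O[l] fun _ => (1 : 𝕜))
    (hz : (fun i => z i - r * ν i) =O[l] fun _ => (1 : 𝕜)) :
    (fun i => x i * y i / z i - t * p / r * ν i ^ 2) =O[l] ν := by
  have hquot := div_sub_div_isBigO_inv hν hr hy hz
  have hquot_bdd : (fun i => y i / z i) =O[l] fun _ => (1 : 𝕜) := by
    have hinv : (fun i => (ν i)⁻¹) =O[l] fun _ => (1 : 𝕜) :=
      (tendsto_inv₀_cobounded.comp hν).isBigO_one 𝕜
    simpa only [sub_add_cancel] using
      (hquot.trans hinv).add (isBigO_const_const (t / r) one_ne_zero l)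
  have hx_error : (fun i => (x i - p * ν i ^ 2) * (y i / z i)) =O[l] ν := by
    simpa only [mul_one] using hx.mul hquot_bdd
  have hquot_error : (fun i => p * ν i ^ 2 * (y i / z i - t / r)) =O[l] ν := by
    refine ((isBigO_const_mul_self p (fun i => ν i ^ 2) l).mul hquot).congr_right fun i => ?_
    rw [pow_two, mul_self_mul_inv]
  exact (hx_error.add hquot_error).congr_left fun i => by ring

end Quotient

section NatCast

theorem natCast_rpow_isBigO_natCast_rpow {s t : ℝ} (hst : s ≤ t) :
    (fun n : ℕ => (n : ℝ) ^ s) =O[atTop] fun n : ℕ => (n : ℝ) ^ t := by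
  refine .of_norm_eventuallyLE ?_
  filter_upwards [eventually_ge_atTop 1] with n hn
  rw [Real.norm_of_nonneg (by positivity)]
  exact Real.rpow_le_rpow_of_exponent_le (by exact_mod_cast hn) hst

theorem natCast_rpow_isBigO_one {s : ℝ} (hs : s ≤ 0) :
    (fun n : ℕ => (n : ℝ) ^ s) =O[atTop] fun _ => (1 : ℝ) := by
  simpa only [Real.rpow_zero] using natCast_rpow_isBigO_natCast_rpow hs

variable {𝕜 : Type*} [NormedField 𝕜]

theorem sub_linear_isBigO_one_of_affine {f : ℕ → 𝕜} {c d : 𝕜} {s : ℝ} (hs : s ≤ 0)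
    (hf : (fun n : ℕ => f n - (c * n + d)) =O[atTop] fun n : ℕ => (n : ℝ) ^ s) :
    (fun n : ℕ => f n - c * n) =O[atTop] fun _ => (1 : 𝕜) := by
  have herror := (hf.trans (natCast_rpow_isBigO_one hs)).trans
    (isBigO_const_const (1 : ℝ) (one_ne_zero (α := 𝕜)) _)
  exact (herror.add (isBigO_const_const d one_ne_zero _)).congr_left fun n => by ring

theorem succ_sub_linear_isBigO_one {f : ℕ → 𝕜} {c : 𝕜}
    (hf : (fun n : ℕ => f n - c * n) =O[atTop] fun _ => (1 : 𝕜)) :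
    (fun n : ℕ => f (n + 1) - c * n) =O[atTop] fun _ => (1 : 𝕜) :=
  ((hf.comp_tendsto (tendsto_add_atTop_nat 1)).add
    (isBigO_const_const c one_ne_zero _)).congr_left fun n => by
      simp only [Function.comp_apply, Nat.cast_succ]
      ring

variable [NormSMulClass ℤ 𝕜]

theorem natCast_isTheta_natCast_real :
    (fun n : ℕ => (n : 𝕜)) =Θ[atTop] fun n : ℕ => (n : ℝ) :=
  .of_norm_eventuallyEq_norm <| .of_forall fun n => by simp

theorem natCast_isBigO_natCast_rpow {s : ℝ} (hs : 1 ≤ s) :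
    (fun n : ℕ => (n : 𝕜)) =O[atTop] fun n : ℕ => (n : ℝ) ^ s :=
  natCast_isTheta_natCast_real.isBigO.trans <| by
    simpa only [Real.rpow_one] using natCast_rpow_isBigO_natCast_rpow hs

theorem natCast_rpow_isBigO_natCast {s : ℝ} (hs : s ≤ 1) :
    (fun n : ℕ => (n : ℝ) ^ s) =O[atTop] fun n : ℕ => (n : 𝕜) :=
  .trans (by simpa only [Real.rpow_one] using natCast_rpow_isBigO_natCast_rpow hs)
    natCast_isTheta_natCast_real.isBigO_symm

theorem one_isBigO_natCast : (fun _ => (1 : 𝕜)) =O[atTop] fun n : ℕ => (n : 𝕜) :=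
  (one_isLittleO_of_tendsto_cobounded tendsto_natCast_atTop_cobounded).isBigO

theorem sub_sq_isBigO_natCast_of_quadratic {f : ℕ → 𝕜} {c d e : 𝕜} {s : ℝ} (hs : s ≤ 1)
    (hf : (fun n : ℕ => f n - (c * n ^ 2 + d * n + e)) =O[atTop] fun n : ℕ => (n : ℝ) ^ s) :
    (fun n : ℕ => f n - c * n ^ 2) =O[atTop] fun n : ℕ => (n : 𝕜) := by
  have hlinear : (fun n : ℕ => d * (n : 𝕜) + e) =O[atTop] fun n : ℕ => (n : 𝕜) :=
    (isBigO_const_mul_self d _ _).add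
      ((isBigO_const_const e one_ne_zero _).trans one_isBigO_natCast)
  exact ((hf.trans (natCast_rpow_isBigO_natCast hs)).add hlinear).congr_left fun n => by ring

theorem stmt11_general {a b u : ℕ → 𝕜} {p q τ : 𝕜} (hτ : τ + q ≠ 0)
    (ha : (fun n : ℕ => a (n + 1) - p * n ^ 2) =O[atTop] fun n : ℕ => (n : 𝕜))
    (hb : (fun n : ℕ => b (n + 1) - q * n) =O[atTop] fun _ => (1 : 𝕜))
    (hu : (fun n : ℕ => u n - τ * n) =O[atTop] fun _ => (1 : 𝕜)) :
    (fun n : ℕ => a (n + 1) * u n / (b (n + 1) + u (n + 1)) - τ * p / (τ + q) * (n : 𝕜) ^ 2)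
      =O[atTop] fun n : ℕ => (n : 𝕜) := by
  have hden : (fun n : ℕ => b (n + 1) + u (n + 1) - (τ + q) * n) =O[atTop] fun _ => (1 : 𝕜) :=
    (hb.add (succ_sub_linear_isBigO_one hu)).congr_left fun n => by ring
  exact mul_div_sub_const_mul_sq_isBigO tendsto_natCast_atTop_cobounded hτ ha hu hden

end NatCast

/-- Class D̃₂₁: asymptotics of the tail product
`I_n = a_{n+1} u_n / (b_{n+1} + u_{n+1})`. -/
theorem stmt11 (pm2 pm1 p₀ qm1 q₀ : ℂ) (hpm2 : pm2 ≠ 0) (hqm1 : qm1 ≠ 0)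
    (a b : ℕ → ℂ)
    (ha : (fun n : ℕ => a (n + 1) - (pm2 * n ^ 2 + pm1 * n + p₀))
      =O[atTop] fun n : ℕ => (n : ℝ) ^ (-(1 : ℝ)))
    (hb : (fun n : ℕ => b (n + 1) - (qm1 * n + q₀))
      =O[atTop] fun n : ℕ => (n : ℝ) ^ (-(1 : ℝ)))
    (u : ℕ → ℂ) (τm2 τ0 : ℂ) (hτ : τm2 + qm1 ≠ 0)
    (hu : (fun n : ℕ => u n - (τm2 * n + τ0))
      =O[atTop] fun n : ℕ => (n : ℝ) ^ (-(1 / 2 : ℝ))) :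
    (fun n : ℕ => a (n + 1) * u n / (b (n + 1) + u (n + 1))
        - τm2 * pm2 / (τm2 + qm1) * (n : ℂ) ^ 2)
      =O[atTop] fun n : ℕ => (n : ℝ) ^ ((3 : ℝ) / 2) := by
  have hI := stmt11_general hτ (sub_sq_isBigO_natCast_of_quadratic (by norm_num) ha)
    (sub_linear_isBigO_one_of_affine (by norm_num) hb)
    (sub_linear_isBigO_one_of_affine (by norm_num) hu)
  exact hI.trans (natCast_isBigO_natCast_rpow (by norm_num))
end

section
/- Let p₋₂, p₋₂', q₋₁, q₋₁' be complex numbers with p₋₂·p₋₂' ≠ 0, and set Δ := (p₋₂ − p₋₂' + q₋₁·q₋₁')² + 4·q₋₁'·q₋₁·p₋₂'. Suppose Δ ≠ 0. If τ ∈ ℂ satisfies the quadratic equation q₋₁'·τ² + (p₋₂ − p₋₂' + q₋₁·q₋₁')·τ − q₋₁·p₋₂' = 0, then (p₋₂ + q₋₁·q₋₁' + q₋₁'·τ)² ≠ p₋₂·p₋₂'. -/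
/-!
Put `D = p₋₂ + q₋₁q₋₁' + q₋₁'τ`. Multiplying the equation of `τ` by `q₋₁'` turns it into
`D² - (p₋₂ + p₋₂' + q₋₁q₋₁') D + p₋₂p₋₂' = 0`, a quadratic whose discriminant is again `Δ` and
whose roots have product `p₋₂p₋₂'`. If `D²` were equal to this nonzero product, the other root
would be `D` as well, so `Δ` would vanish.
-/

section Quadratic

variable {R : Type*} [CommRing R]

theorem discrim_eq_zero_of_mul_mul_self_eq {a b c x : R} (hc : IsRegular c)
    (hroot : a * (x * x) + b * x + c = 0) (hsq : a * (x * x) = c) : discrim a b c = 0 := by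
  have hx : IsLeftRegular x := .of_mul (a := a * x) <| by
    rw [mul_assoc, hsq]
    exact hc.left
  have hdouble : 2 * a * x + b = 0 :=
    hx.mul_left_eq_zero_iff.mp <| by linear_combination hroot + hsq
  rw [discrim_eq_sq_of_quadratic_eq_zero hroot, hdouble, zero_pow two_ne_zero]

theorem tail_denominator_quadratic_eq_zero {p p' q q' τ : R}
    (hτ : q' * τ ^ 2 + (p - p' + q * q') * τ - q * p' = 0) :
    1 * ((p + q * q' + q' * τ) * (p + q * q' + q' * τ)) +
      -(p + p' + q * q') * (p + q * q' + q' * τ) + p * p' = 0 := by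
  linear_combination q' * hτ

theorem discrim_tail_denominator (p p' q q' : R) :
    discrim 1 (-(p + p' + q * q')) (p * p') = (p - p' + q * q') ^ 2 + 4 * q' * q * p' := by
  rw [discrim]
  ring

theorem stmt14_general {p p' q q' τ : R} (hp : IsRegular (p * p'))
    (hΔ : (p - p' + q * q') ^ 2 + 4 * q' * q * p' ≠ 0)
    (hτ : q' * τ ^ 2 + (p - p' + q * q') * τ - q * p' = 0) :
    (p + q * q' + q' * τ) ^ 2 ≠ p * p' := by
  intro hsq
  rw [← discrim_tail_denominator] at hΔ
  exact hΔ <| discrim_eq_zero_of_mul_mul_self_eq hp (tail_denominator_quadratic_eq_zero hτ) <| by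
    rw [one_mul, ← sq, hsq]

end Quadratic

/-- For a root `τ` of the D̃₂₁ quadratic with nonzero discriminant `Δ` and
`p₋₂ p₋₂' ≠ 0`, the quantity `(p₋₂ + q₋₁q₋₁' + q₋₁'τ)²` differs from `p₋₂ p₋₂'`. -/
theorem stmt14 (pm2 pm2' qm1 qm1' : ℂ) (hp : pm2 * pm2' ≠ 0)
    (hΔ : (pm2 - pm2' + qm1 * qm1') ^ 2 + 4 * qm1' * qm1 * pm2' ≠ 0)
    (τ : ℂ)
    (hτ : qm1' * τ ^ 2 + (pm2 - pm2' + qm1 * qm1') * τ - qm1 * pm2' = 0) :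
    (pm2 + qm1 * qm1' + qm1' * τ) ^ 2 ≠ pm2 * pm2' :=
  stmt14_general (.of_ne_zero hp) hΔ hτ
end

section
/- Let p₋₂, p₋₂', q₋₁, q₋₁' be complex numbers, set Δ := (p₋₂ − p₋₂' + q₋₁·q₋₁')² + 4·q₋₁'·q₋₁·p₋₂'. If τ ∈ ℂ satisfies the quadratic equation q₋₁'·τ² + (p₋₂ − p₋₂' + q₋₁·q₋₁')·τ − q₋₁·p₋₂' = 0, then, setting z := (p₋₂ + q₋₁·q₋₁' + q₋₁'·τ)² − p₋₂·p₋₂', the identity (2z − Δ)² = Δ·(p₋₂ + p₋₂' + q₋₁·q₋₁')² holds. -/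
/-!
Up to clearing denominators, `τ` is a fixed point of the Möbius transformation with matrix
`M = !![p₋₂', q₋₁p₋₂'; q₋₁', p₋₂ + q₋₁q₋₁']`. Then `(τ, 1)` is an eigenvector of `M`, whose
eigenvalue is the denominator `w = q₋₁'τ + p₋₂ + q₋₁q₋₁'`, and `z = w² − det M`. The fixed-point
quadratic and the characteristic polynomial of `M` have the same discriminant `Δ`, so `w² = sw − d`
with `s = tr M` and `d = det M` yields `2z − Δ = s(2w − s)`, while `(2w − s)² = Δ`.
-/

section FixedPoint

variable {R : Type*} [CommRing R]

lemma sq_two_mul_sq_sub_sub_discrim {s d w : R} (hw : w ^ 2 - s * w + d = 0) :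
    (2 * (w ^ 2 - d) - discrim 1 (-s) d) ^ 2 = discrim 1 (-s) d * s ^ 2 := by
  have hdiscrim : discrim 1 (-s) d = (2 * w - s) ^ 2 := by
    rw [discrim_eq_sq_of_quadratic_eq_zero (x := w) (by linear_combination hw)]
    ring
  have hfactor : 2 * (w ^ 2 - d) - discrim 1 (-s) d = (2 * w - s) * s := by
    rw [discrim]
    linear_combination 2 * hw
  rw [hfactor, mul_pow, hdiscrim]

lemma discrim_fixedPoint_eq_discrim_charpoly (M : Matrix (Fin 2) (Fin 2) R) :
    discrim (M 1 0) (M 1 1 - M 0 0) (-M 0 1) = discrim 1 (-M.trace) M.det := by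
  rw [discrim, discrim, Matrix.trace_fin_two, Matrix.det_fin_two]
  ring

lemma mulVec_eq_smul_of_fixedPoint {M : Matrix (Fin 2) (Fin 2) R} {τ : R}
    (hτ : M 1 0 * τ ^ 2 + (M 1 1 - M 0 0) * τ - M 0 1 = 0) :
    M.mulVec ![τ, 1] = (M 1 0 * τ + M 1 1) • ![τ, 1] := by
  have hzero : M 0 0 * τ + M 0 1 = (M 1 0 * τ + M 1 1) * τ := by
    linear_combination -hτ
  ext i
  fin_cases i <;> simp [Matrix.mulVec_eq_sum, mul_comm τ, hzero]

lemma sq_sub_trace_mul_add_det_eq_zero_of_mulVec_eq_smul {M : Matrix (Fin 2) (Fin 2) R} {τ w : R}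
    (h : M.mulVec ![τ, 1] = w • ![τ, 1]) : w ^ 2 - M.trace * w + M.det = 0 := by
  have hzero : M 0 0 * τ + M 0 1 = w * τ := by
    simpa [Matrix.mulVec_eq_sum, mul_comm τ] using congrFun h 0
  have hone : M 1 0 * τ + M 1 1 = w := by
    simpa [Matrix.mulVec_eq_sum, mul_comm τ] using congrFun h 1
  rw [Matrix.trace_fin_two, Matrix.det_fin_two]
  linear_combination (M 0 0 - w) * hone - M 1 0 * hzero

theorem stmt15_general (pm2 pm2' qm1 qm1' τ : R)
    (hτ : qm1' * τ ^ 2 + (pm2 - pm2' + qm1 * qm1') * τ - qm1 * pm2' = 0) :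
    (2 * ((pm2 + qm1 * qm1' + qm1' * τ) ^ 2 - pm2 * pm2')
        - ((pm2 - pm2' + qm1 * qm1') ^ 2 + 4 * qm1' * qm1 * pm2')) ^ 2
      = ((pm2 - pm2' + qm1 * qm1') ^ 2 + 4 * qm1' * qm1 * pm2')
        * (pm2 + pm2' + qm1 * qm1') ^ 2 := by
  let M : Matrix (Fin 2) (Fin 2) R := !![pm2', qm1 * pm2'; qm1', pm2 + qm1 * qm1']
  have hfixed : M 1 0 * τ ^ 2 + (M 1 1 - M 0 0) * τ - M 0 1 = 0 := by
    simp only [M, Matrix.of_apply, Matrix.cons_val]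
    linear_combination hτ
  have htrace : M.trace = pm2 + pm2' + qm1 * qm1' := by
    rw [Matrix.trace_fin_two_of]
    ring
  have hdet : M.det = pm2 * pm2' := by
    rw [Matrix.det_fin_two_of]
    ring
  have hdenom : M 1 0 * τ + M 1 1 = pm2 + qm1 * qm1' + qm1' * τ := add_comm _ _
  have hdiscrim : discrim 1 (-M.trace) M.det
      = (pm2 - pm2' + qm1 * qm1') ^ 2 + 4 * qm1' * qm1 * pm2' := by
    rw [← discrim_fixedPoint_eq_discrim_charpoly, discrim]
    simp only [M, Matrix.of_apply, Matrix.cons_val]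
    ring
  have hroot := sq_sub_trace_mul_add_det_eq_zero_of_mulVec_eq_smul
    (mulVec_eq_smul_of_fixedPoint hfixed)
  have hsq := sq_two_mul_sq_sub_sub_discrim hroot
  rwa [hdiscrim, htrace, hdet, hdenom] at hsq

end FixedPoint

/-- The identity `(2z − Δ)² = Δ(p₋₂ + p₋₂' + q₋₁q₋₁')²` for a root `τ` of the
D̃₂₁ quadratic, where `z = (p₋₂ + q₋₁q₋₁' + q₋₁'τ)² − p₋₂p₋₂'` and `Δ` is the
discriminant. -/
theorem stmt15 (pm2 pm2' qm1 qm1' : ℂ) (τ : ℂ)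
    (hτ : qm1' * τ ^ 2 + (pm2 - pm2' + qm1 * qm1') * τ - qm1 * pm2' = 0) :
    (2 * ((pm2 + qm1 * qm1' + qm1' * τ) ^ 2 - pm2 * pm2')
        - ((pm2 - pm2' + qm1 * qm1') ^ 2 + 4 * qm1' * qm1 * pm2')) ^ 2
      = ((pm2 - pm2' + qm1 * qm1') ^ 2 + 4 * qm1' * qm1 * pm2')
        * (pm2 + pm2' + qm1 * qm1') ^ 2 :=
  stmt15_general pm2 pm2' qm1 qm1' τ hτ
end
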